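/- arXiv:1012.0433 — 3 statements merged into one kernel-verified Lean document; each statement's English description precedes it below -/
import Mathlib

section
/- The restriction of 𝒲([2]) to symmetric functions is the cut-and-join operator: for every polynomial F in p₁, p₂, … and every N ≥ 1, (1/2)·Σ_{a,b=1}^N :D_{ab}D_{ba}:(F(p(X))) = ((1/2)·Σ_{a,b≥1} [(a+b)·p_a p_b·∂/∂p_{a+b} + a·b·p_{a+b}·∂²/(∂p_a∂p_b)] F)(p(X)). -/
open scoped Classical
open MvPolynomial

/-- The polynomial ring `ℚ[X_{ij} : 1 ≤ i,j ≤ N]` in the entries of an `N×N` matrix of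
independent variables. -/
abbrev RN (N : ℕ) : Type := MvPolynomial (Fin N × Fin N) ℚ

/-- The `N×N` matrix `X` of independent variables. -/
noncomputable def XM (N : ℕ) : Matrix (Fin N) (Fin N) (RN N) :=
  Matrix.of fun i j => MvPolynomial.X (i, j)

/-- The power sums `p_k = tr X^k`. -/
noncomputable def pSub (N : ℕ) (k : ℕ+) : RN N := Matrix.trace ((XM N) ^ (k : ℕ))

/-- Substitution `F ↦ F(p(X))` of `p_k = tr X^k` into a polynomial in `p₁, p₂, …`
(the variable of index `k : ℕ+` is `p_k`). -/
noncomputable def psubst (N : ℕ) : MvPolynomial ℕ+ ℚ →ₐ[ℚ] RN N :=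
  MvPolynomial.aeval (pSub N)

/-- The operator `D_{ab} = Σ_{e=1}^N X_{ae} ∂/∂X_{be}`. -/
noncomputable def DN (N : ℕ) (a b : Fin N) (P : RN N) : RN N :=
  ∑ e : Fin N, MvPolynomial.X (a, e) * MvPolynomial.pderiv (b, e) P

/-- The normally ordered operator
`:D_{a₁b₁}⋯D_{a_nb_n}: = Σ_{e₁,…,e_n=1}^N X_{a₁e₁}⋯X_{a_ne_n} ∂ⁿ/(∂X_{b₁e₁}⋯∂X_{b_ne_n})`. -/
noncomputable def NOpN (N : ℕ) {n : ℕ} (a b : Fin n → Fin N) (P : RN N) : RN N :=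
  ∑ e : Fin n → Fin N,
    (∏ i, MvPolynomial.X (a i, e i)) *
      (List.ofFn (fun i => ((b i, e i) : Fin N × Fin N))).foldr
        (fun v G => MvPolynomial.pderiv v G) P

/-- The full cycle type of a permutation of `Fin n`, including fixed points
(i.e. rows of length 1). -/
noncomputable def fullCycleType {n : ℕ} (g : Equiv.Perm (Fin n)) : Multiset ℕ :=
  g.cycleType + Multiset.replicate (n - g.cycleType.sum) 1

/-- `κ(Δ) = (∏_k m_k! k^{m_k})⁻¹` where `m_k` is the number of rows of length `k`. -/
noncomputable def kappa (parts : Multiset ℕ) : ℚ :=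
  (∏ k ∈ parts.toFinset, (((parts.count k).factorial : ℚ) * (k : ℚ) ^ (parts.count k)))⁻¹

/-- The operator `𝒲_N(Δ) = κ(Δ) Σ_{a₁,…,a_n=1}^N :D_{a₁a_{g(1)}}⋯D_{a_na_{g(n)}}:`
computed from a permutation `g` of cycle type `Δ`. -/
noncomputable def WN (N : ℕ) {n : ℕ} (Δ : Nat.Partition n) (g : Equiv.Perm (Fin n))
    (P : RN N) : RN N :=
  kappa Δ.parts • ∑ a : Fin n → Fin N, NOpN N a (fun i => a (g i)) P

theorem aux_NOp (N : ℕ) (a b : Fin N) (P : RN N) :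
    NOpN N ![a, b] ![b, a] P = ∑ e : Fin N, ∑ f : Fin N,
      X (a, e) * X (b, f) * pderiv (b, e) (pderiv (a, f) P) := by
  unfold NOpN
  rw [← Fintype.sum_prod_type'
    (fun x y : Fin N => X (a, x) * X (b, y) * pderiv (b, x) (pderiv (a, y) P))]
  refine Fintype.sum_equiv (finTwoArrowEquiv (Fin N)) _ _ ?_
  intro e
  simp [List.ofFn_succ, Fin.prod_univ_two, finTwoArrowEquiv]

theorem aux_pow (N : ℕ) (b e : Fin N) (m : ℕ) (i j : Fin N) :
    pderiv (b, e) ((XM N ^ m) i j) =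
      ∑ t ∈ Finset.range m, (XM N ^ t) i b * (XM N ^ (m - 1 - t)) e j := by
  induction m generalizing i j with
  | zero =>
    simp [Matrix.one_apply]
    split_ifs <;> simp
  | succ m ih =>
    have h1 : ∀ x, pderiv (b, e) (XM N x j) = if x = b ∧ e = j then 1 else 0 := by
      intro x
      simp only [XM, Matrix.of_apply, pderiv_X, Pi.single_apply, Prod.mk.injEq]
      congr 1
      simp [eq_comm]
    rw [pow_succ, Matrix.mul_apply, map_sum]
    simp only [Derivation.leibniz, smul_eq_mul, h1, ih]
    rw [Finset.sum_add_distrib, Finset.sum_range_succ, add_comm]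
    congr 1
    · simp only [Finset.mul_sum]
      rw [Finset.sum_comm]
      refine Finset.sum_congr rfl fun t ht => ?_
      have h2 : m + 1 - 1 - t = (m - 1 - t) + 1 := by
        have := Finset.mem_range.mp ht
        omega
      rw [h2, pow_succ, Matrix.mul_apply, Finset.mul_sum]
      refine Finset.sum_congr rfl fun x _ => by ring
    · by_cases hj : e = j <;> simp [hj, Matrix.one_apply]

theorem aux_tr (N : ℕ) (b e : Fin N) (m : ℕ) :
    pderiv (b, e) (Matrix.trace (XM N ^ m)) = (m : RN N) * (XM N ^ (m - 1)) e b := by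
  simp only [Matrix.trace, Matrix.diag, map_sum, aux_pow]
  rw [Finset.sum_comm]
  rw [Finset.sum_congr rfl (g := fun _ => (XM N ^ (m - 1)) e b)]
  · simp
  · intro t ht
    have h2 : m - 1 = (m - 1 - t) + t := by
      have := Finset.mem_range.mp ht
      omega
    conv_rhs => rw [h2, pow_add, Matrix.mul_apply]
    refine Finset.sum_congr rfl fun x _ => by ring

theorem aux_tr2 (N : ℕ) (b e a f : Fin N) (m : ℕ) :
    pderiv (b, e) (pderiv (a, f) (Matrix.trace (XM N ^ m))) =
      (m : RN N) * ∑ t ∈ Finset.range (m - 1),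
        (XM N ^ t) f b * (XM N ^ (m - 1 - 1 - t)) e a := by
  rw [aux_tr, Derivation.leibniz, aux_pow]
  simp

theorem aux_trmul (N : ℕ) (m : ℕ) :
    Matrix.trace (XM N ^ (m + 1)) = ∑ a, ∑ e, X (a, e) * (XM N ^ m) e a := by
  simp [pow_succ', Matrix.trace, Matrix.mul_apply, XM]

theorem aux_cut (N : ℕ) (m : ℕ) :
    ∑ a, ∑ b, ∑ e, ∑ f, X (a, e) * X (b, f) *
      pderiv (b, e) (pderiv (a, f) (Matrix.trace (XM N ^ m))) =
    (m : RN N) * ∑ t ∈ Finset.range (m - 1),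
      Matrix.trace (XM N ^ (t + 1)) * Matrix.trace (XM N ^ (m - 1 - t)) := by
  simp only [aux_tr2]
  have : ∀ t ∈ Finset.range (m - 1),
      Matrix.trace (XM N ^ (t + 1)) * Matrix.trace (XM N ^ (m - 1 - t)) =
      ∑ a, ∑ b, ∑ e, ∑ f, X (a, e) * X (b, f) *
        ((XM N ^ t) f b * (XM N ^ (m - 1 - 1 - t)) e a) := by
    intro t ht
    have h2 : m - 1 - t = (m - 1 - 1 - t) + 1 := by
      have := Finset.mem_range.mp ht
      omega
    rw [h2, aux_trmul, aux_trmul, mul_comm, Finset.sum_mul_sum]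
    refine Finset.sum_congr rfl fun a _ => Finset.sum_congr rfl fun b _ => ?_
    rw [Finset.sum_mul_sum]
    refine Finset.sum_congr rfl fun e _ => Finset.sum_congr rfl fun f _ => ?_
    ring
  rw [Finset.sum_congr rfl this]
  simp only [Finset.mul_sum]
  rw [Finset.sum_comm' (t' := Finset.univ) (s' := fun _ => Finset.range (m-1)) (by simp)]
  refine Finset.sum_congr rfl fun a _ => ?_
  rw [Finset.sum_comm' (t' := Finset.univ) (s' := fun _ => Finset.range (m-1)) (by simp)]
  refine Finset.sum_congr rfl fun b _ => ?_
  rw [Finset.sum_comm' (t' := Finset.univ) (s' := fun _ => Finset.range (m-1)) (by simp)]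
  refine Finset.sum_congr rfl fun e _ => ?_
  rw [Finset.sum_comm' (t' := Finset.univ) (s' := fun _ => Finset.range (m-1)) (by simp)]
  refine Finset.sum_congr rfl fun f _ => ?_
  refine Finset.sum_congr rfl fun t _ => by ring

theorem aux_join (N : ℕ) (j k : ℕ) (hj : 1 ≤ j) (hk : 1 ≤ k) :
    ∑ a, ∑ b, ∑ e, ∑ f, X (a, e) * X (b, f) *
      (pderiv (b, e) (Matrix.trace (XM N ^ j)) * pderiv (a, f) (Matrix.trace (XM N ^ k))) =
    (j : RN N) * (k : RN N) * Matrix.trace (XM N ^ (j + k)) := by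
  obtain ⟨j, rfl⟩ := Nat.exists_eq_add_of_le' hj
  obtain ⟨k, rfl⟩ := Nat.exists_eq_add_of_le' hk
  simp only [aux_tr, Nat.add_sub_cancel]
  rw [pow_add, Matrix.trace, Finset.mul_sum]
  refine Finset.sum_congr rfl fun a _ => ?_
  rw [Matrix.diag, Matrix.mul_apply, Finset.mul_sum]
  refine Finset.sum_congr rfl fun b _ => ?_
  rw [pow_succ', pow_succ', Matrix.mul_apply, Matrix.mul_apply, Finset.sum_mul_sum,
    Finset.mul_sum]
  refine Finset.sum_congr rfl fun e _ => ?_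
  rw [Finset.mul_sum]
  refine Finset.sum_congr rfl fun f _ => ?_
  simp only [XM, Matrix.of_apply]
  ring

theorem aux_chain (N : ℕ) (v : Fin N × Fin N) (T : Finset ℕ+) (F : MvPolynomial ℕ+ ℚ)
    (hF : F.vars ⊆ T) :
    pderiv v (psubst N F) = ∑ k ∈ T, psubst N (pderiv k F) * pderiv v (pSub N k) := by
  have hF' : F ∈ supported ℚ (T : Set ℕ+) := by
    rw [mem_supported]; exact_mod_cast hF
  rw [supported] at hF'
  clear hF
  induction hF' using Algebra.adjoin_induction with
  | mem x hx =>
    obtain ⟨k, hk, rfl⟩ := hx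
    have hk' : k ∈ T := hk
    simp [psubst, pderiv_X, Pi.single_apply, hk', apply_ite]
  | algebraMap r => simp [psubst]
  | add x y _ _ hx hy =>
    simp only [map_add, hx, hy, add_mul, Finset.sum_add_distrib]
  | mul x y _ _ hx hy =>
    rw [map_mul, Derivation.leibniz, hx, hy, smul_eq_mul, smul_eq_mul, Finset.mul_sum,
      Finset.mul_sum, ← Finset.sum_add_distrib]
    refine Finset.sum_congr rfl fun k _ => ?_
    rw [Derivation.leibniz, smul_eq_mul, smul_eq_mul, map_add, map_mul, map_mul, add_mul,
      mul_assoc, mul_assoc]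

theorem aux_vars (T : Finset ℕ+) (F : MvPolynomial ℕ+ ℚ) (k : ℕ+)
    (hF : F.vars ⊆ T) : (pderiv k F).vars ⊆ T := by
  have hF' : F ∈ supported ℚ (T : Set ℕ+) := by
    rw [mem_supported]; exact_mod_cast hF
  suffices h : pderiv k F ∈ supported ℚ (T : Set ℕ+) by
    rw [mem_supported] at h; exact_mod_cast h
  clear hF
  rw [supported] at hF' ⊢
  induction hF' using Algebra.adjoin_induction with
  | mem x hx =>
    obtain ⟨j, hj, rfl⟩ := hx
    rw [pderiv_X, Pi.single_apply]
    split_ifs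
    · exact one_mem _
    · exact zero_mem _
  | algebraMap r => simp [MvPolynomial.algebraMap_eq]
  | add x y _ _ hx hy => rw [map_add]; exact add_mem hx hy
  | mul x y h1 h2 hx hy =>
    rw [Derivation.leibniz]
    exact add_mem (mul_mem h1 hy) (mul_mem h2 hx)

theorem aux_zero (F : MvPolynomial ℕ+ ℚ) (k : ℕ+) (hF : k ∉ F.vars) : pderiv k F = 0 :=
  pderiv_eq_zero_of_notMem_vars hF

theorem aux_reindex {R : Type*} [CommRing R] (M : ℕ+) (P : ℕ → R) (G : ℕ+ → R)
    (hG : ∀ k, M < k → G k = 0) :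
    ∑ a ∈ Finset.Icc 1 M, ∑ b ∈ Finset.Icc 1 M,
      (((a : ℕ) : R) + ((b : ℕ) : R)) * (P a * P b * G (a + b)) =
    ∑ k ∈ Finset.Icc 1 M, G k * (((k : ℕ) : R) * ∑ t ∈ Finset.range ((k : ℕ) - 1),
      P (t + 1) * P ((k : ℕ) - 1 - t)) := by
  rw [← Finset.sum_product']
  simp only [Finset.mul_sum]
  rw [Finset.sum_sigma']
  rw [← Finset.sum_filter_of_ne (p := fun x : ℕ+ × ℕ+ => x.1 + x.2 ≤ M)]
  · refine Finset.sum_bij' (fun x _ => (⟨x.1 + x.2, (x.1 : ℕ) - 1⟩ : (_ : ℕ+) × ℕ))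
      (fun y _ => (⟨y.2.succPNat, Nat.toPNat' ((y.1 : ℕ) - 1 - y.2)⟩ : ℕ+ × ℕ+)) ?_ ?_ ?_ ?_ ?_
    · rintro ⟨a, b⟩ h
      have h1 := a.pos
      have h2 := b.pos
      simp at h ⊢
      refine ⟨h.2, ?_⟩
      omega
    · rintro ⟨k, t⟩ h
      simp only [Finset.mem_sigma, Finset.mem_Icc, Finset.mem_range] at h
      have h3 := h.1.2
      rw [← PNat.coe_le_coe] at h3
      have h4 : 0 < (k : ℕ) - 1 - t := by omega
      simp only [Finset.mem_filter, Finset.mem_product, Finset.mem_Icc, PNat.one_coe,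
        ← PNat.coe_le_coe, PNat.add_coe, Nat.succPNat_coe, Nat.toPNat'_coe, h4, if_true]
      omega
    · rintro ⟨a, b⟩ h
      have h1 := a.pos
      have h2 := b.pos
      have h4 : 0 < (a : ℕ) + b - 1 - (a - 1) := by omega
      refine Prod.ext (PNat.eq ?_) (PNat.eq ?_)
      · simp only [Nat.succPNat_coe]; omega
      · simp only [PNat.add_coe, Nat.toPNat'_coe, h4, if_true]; omega
    · rintro ⟨k, t⟩ h
      simp only [Finset.mem_sigma, Finset.mem_Icc, Finset.mem_range] at h
      have h4 : 0 < (k : ℕ) - 1 - t := by omega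
      have h5 : t.succPNat + Nat.toPNat' ((k : ℕ) - 1 - t) = k := by
        apply PNat.eq
        simp only [PNat.add_coe, Nat.succPNat_coe, Nat.toPNat'_coe, h4, if_true]
        omega
      simp [h5]
    · rintro ⟨a, b⟩ h
      have h1 := a.pos
      have h2 := b.pos
      have h3 : (a : ℕ) - 1 + 1 = a := by omega
      have h4 : (a : ℕ) + b - 1 - (a - 1) = b := by omega
      simp only [PNat.add_coe, h3, h4]
      push_cast
      ring
  · rintro ⟨a, b⟩ _ h
    by_contra h'
    exact h (by simp [hG _ (not_le.mp h')])

theorem aux_lin {R ι κ : Type*} [CommRing R] [Fintype ι] (T : Finset κ)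
    (Y : ι → ι → ι → ι → R) (c : κ → R) (H : κ → ι → ι → ι → ι → R) :
    ∑ a, ∑ b, ∑ e, ∑ f, Y a b e f * ∑ k ∈ T, c k * H k a b e f =
    ∑ k ∈ T, c k * ∑ a, ∑ b, ∑ e, ∑ f, Y a b e f * H k a b e f := by
  simp only [Finset.mul_sum]
  rw [Finset.sum_comm]
  rw [Finset.sum_comm (s := T)]
  rw [Finset.sum_comm]
  refine Finset.sum_congr rfl fun a _ => ?_
  rw [Finset.sum_comm (s := T)]
  refine Finset.sum_congr rfl fun b _ => ?_
  rw [Finset.sum_comm (s := T)]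
  refine Finset.sum_congr rfl fun e _ => ?_
  rw [Finset.sum_comm (s := T)]
  refine Finset.sum_congr rfl fun f _ => ?_
  refine Finset.sum_congr rfl fun k _ => by ring

theorem aux_chain2 (N : ℕ) (v w : Fin N × Fin N) (T : Finset ℕ+) (F : MvPolynomial ℕ+ ℚ)
    (hF : F.vars ⊆ T) :
    pderiv v (pderiv w (psubst N F)) =
      ∑ k ∈ T, psubst N (pderiv k F) * pderiv v (pderiv w (pSub N k)) +
      ∑ x ∈ T ×ˢ T, psubst N (pderiv x.1 (pderiv x.2 F)) *
        (pderiv v (pSub N x.1) * pderiv w (pSub N x.2)) := by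
  rw [aux_chain N w T F hF, map_sum, Finset.sum_product_right, ← Finset.sum_add_distrib]
  refine Finset.sum_congr rfl fun k _ => ?_
  rw [Derivation.leibniz, aux_chain N v T _ (aux_vars T F k hF), smul_eq_mul, smul_eq_mul,
    Finset.mul_sum]
  refine congrArg₂ (· + ·) rfl ?_
  refine Finset.sum_congr rfl fun j _ => ?_
  generalize psubst N (pderiv j (pderiv k F)) = A
  rw [mul_left_comm, mul_comm (pderiv w (pSub N k))]

theorem aux_main (N : ℕ) (T : Finset ℕ+) (F : MvPolynomial ℕ+ ℚ) (hF : F.vars ⊆ T) :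
    ∑ a : Fin N, ∑ b : Fin N, NOpN N ![a, b] ![b, a] (psubst N F) =
      ∑ k ∈ T, psubst N (pderiv k F) * (((k : ℕ) : RN N) * ∑ t ∈ Finset.range ((k : ℕ) - 1),
        Matrix.trace (XM N ^ (t + 1)) * Matrix.trace (XM N ^ ((k : ℕ) - 1 - t))) +
      ∑ x ∈ T ×ˢ T, psubst N (pderiv x.1 (pderiv x.2 F)) *
        (((x.1 : ℕ) : RN N) * ((x.2 : ℕ) : RN N) * Matrix.trace (XM N ^ ((x.1 : ℕ) + (x.2 : ℕ)))) := by
  simp only [aux_NOp, aux_chain2 N _ _ T F hF, mul_add, Finset.sum_add_distrib]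
  refine congrArg₂ (· + ·)
    ((aux_lin T (fun a b e f => X (a, e) * X (b, f)) (fun k => psubst N (pderiv k F))
      (fun k a b e f => pderiv (b, e) (pderiv (a, f) (pSub N k)))).trans ?_)
    ((aux_lin (T ×ˢ T) (fun a b e f => X (a, e) * X (b, f))
      (fun x => psubst N (pderiv x.1 (pderiv x.2 F)))
      (fun x a b e f => pderiv (b, e) (pSub N x.1) * pderiv (a, f) (pSub N x.2))).trans ?_)
  · refine Finset.sum_congr rfl fun k _ => ?_
    simp only [pSub, aux_cut]
  · refine Finset.sum_congr rfl fun x _ => ?_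
    simp only [pSub]
    rw [aux_join N _ _ x.1.pos x.2.pos]

theorem aux_finsum (T : Finset ℕ+) (g : ℕ+ → ℕ+ → MvPolynomial ℕ+ ℚ)
    (h : ∀ a b, g a b ≠ 0 → a ∈ T ∧ b ∈ T) :
    ∑ᶠ a, ∑ᶠ b, g a b = ∑ a ∈ T, ∑ b ∈ T, g a b := by
  have h1 : ∀ a, ∑ᶠ b, g a b = ∑ b ∈ T, g a b := fun a =>
    finsum_eq_sum_of_support_subset _ fun b hb => (h a b hb).2
  simp only [h1]
  refine finsum_eq_sum_of_support_subset _ fun a ha => ?_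
  obtain ⟨b, _, hb⟩ := Finset.exists_ne_zero_of_sum_ne_zero ha
  exact (h a b hb).1

theorem W2_is_cut_and_join (N : ℕ) (hN : 1 ≤ N) (F : MvPolynomial ℕ+ ℚ) :
    (1/2 : ℚ) • ∑ a : Fin N, ∑ b : Fin N, NOpN N ![a, b] ![b, a] (psubst N F) =
      psubst N ((1/2 : ℚ) •
        (∑ᶠ a : ℕ+, ∑ᶠ b : ℕ+,
            (((a : ℕ) : ℚ) + ((b : ℕ) : ℚ)) •
              (MvPolynomial.X a * MvPolynomial.X b * MvPolynomial.pderiv (a + b) F) +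
         ∑ᶠ a : ℕ+, ∑ᶠ b : ℕ+,
            (((a : ℕ) : ℚ) * ((b : ℕ) : ℚ)) •
              (MvPolynomial.X (a + b) *
                MvPolynomial.pderiv a (MvPolynomial.pderiv b F)))) := by
  obtain ⟨M, hM⟩ : ∃ M : ℕ+, ∀ k ∈ F.vars, k ≤ M :=
    F.vars.exists_le
  have hT : F.vars ⊆ Finset.Icc 1 M := fun k hk => Finset.mem_Icc.mpr ⟨one_le, hM k hk⟩
  have hz : ∀ k, M < k → pderiv k F = 0 := fun k hk =>
    aux_zero F k fun h => absurd (hM k h) (not_le.mpr hk)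
  rw [aux_main N _ F hT, map_smul, map_add]
  rw [aux_finsum (Finset.Icc 1 M), aux_finsum (Finset.Icc 1 M)]
  · congr 2
    · rw [← aux_reindex M (fun n => Matrix.trace (XM N ^ n)) (fun k => psubst N (pderiv k F))
        (fun k hk => by rw [hz k hk, map_zero])]
      simp only [map_sum, map_smul, map_mul]
      refine Finset.sum_congr rfl fun a _ => Finset.sum_congr rfl fun b _ => ?_
      simp [psubst, pSub, Algebra.smul_def]
    · rw [Finset.sum_product]
      simp only [map_sum, map_smul, map_mul]
      refine Finset.sum_congr rfl fun a _ => Finset.sum_congr rfl fun b _ => ?_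
      simp [psubst, pSub, Algebra.smul_def]
      ring
  · intro a b hab
    have h1 : pderiv b F ≠ 0 := by
      intro h; simp [h] at hab
    have h2 : pderiv a (pderiv b F) ≠ 0 := by
      intro h; simp [h] at hab
    constructor
    · by_contra h
      exact h2 (aux_zero _ _ fun h' => h (aux_vars _ F b hT h'))
    · by_contra h
      exact h1 (aux_zero _ _ fun h' => h (hT h'))
  · intro a b hab
    have h1 : pderiv (a + b) F ≠ 0 := by
      intro h; simp [h] at hab
    have h2 : a + b ≤ M := by
      by_contra h
      exact h1 (hz _ (not_le.mp h))
    rw [← PNat.coe_le_coe, PNat.add_coe] at h2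
    have h3 := a.pos
    have h4 := b.pos
    simp only [Finset.mem_Icc, PNat.one_coe, ← PNat.coe_le_coe]
    omega
end

section
/- The restriction of 𝒲([3]) to symmetric functions is given in power-sum coordinates by: for every polynomial F in p₁, p₂, … and every N ≥ 1, (1/3)·Σ_{a,b,c=1}^N :D_{ab}D_{bc}D_{ca}:(F(p(X))) equals the value at p = p(X) of [(1/3)Σ_{a,b,c≥1} a·b·c·p_{a+b+c}·∂³/(∂p_a∂p_b∂p_c) + (1/2)Σ_{a+b=c+d} c·d·(1−δ_{ac}δ_{bd})·p_a p_b·∂²/(∂p_c∂p_d) + (1/3)Σ_{a,b,c≥1} (a+b+c)·(p_a p_b p_c + p_{a+b+c})·∂/∂p_{a+b+c}] F. -/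
open scoped Classical
open MvPolynomial

section helpers
variable {N : ℕ}

lemma w3_finsum (M : ℕ) {R : Type*} [AddCommMonoid R] (f : ℕ+ → R)
    (h : ∀ i, M ≤ i → f (Nat.succPNat i) = 0) :
    ∑ᶠ a : ℕ+, f a = ∑ i ∈ Finset.range M, f (Nat.succPNat i) := by
  rw [← finsum_comp_equiv (Equiv.pnatEquivNat.symm) (f := f)]
  have : ∀ i, Equiv.pnatEquivNat.symm i = Nat.succPNat i := fun i => rfl
  simp only [this]
  apply finsum_eq_sum_of_support_subset
  intro i hi
  by_contra hc
  simp at hc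
  exact hi (h i hc)

noncomputable def w3q (N i : ℕ) : RN N := Matrix.trace ((XM N) ^ (i + 1))

lemma w3_pSub (i : ℕ) : pSub N (Nat.succPNat i) = w3q N i := rfl

lemma w3_comm {σ : Type*} (i j : σ) (F : MvPolynomial σ ℚ) :
    pderiv i (pderiv j F) = pderiv j (pderiv i F) := by
  have h : ⁅(pderiv i : Derivation ℚ (MvPolynomial σ ℚ) (MvPolynomial σ ℚ)),
      (pderiv j : Derivation ℚ (MvPolynomial σ ℚ) (MvPolynomial σ ℚ))⁆ = 0 := by
    apply MvPolynomial.derivation_ext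
    intro k
    rw [Derivation.commutator_apply]
    simp [pderiv_X, Pi.single_apply]
    split_ifs <;> simp
  have := congrArg (fun D => D F) h
  simp only [Derivation.commutator_apply] at this
  exact sub_eq_zero.mp this

lemma w3_vanish (F : MvPolynomial ℕ+ ℚ) :
    ∃ K : ℕ, ∀ i, K ≤ i → pderiv (Nat.succPNat i) F = 0 := by
  refine ⟨∑ k ∈ F.vars, (k : ℕ), fun i hi => ?_⟩
  apply pderiv_eq_zero_of_notMem_vars
  intro hm
  have := Finset.single_le_sum (f := fun k : ℕ+ => (k : ℕ)) (fun _ _ => Nat.zero_le _) hm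
  simp at this
  omega

lemma w3_chain_aux (v : Fin N × Fin N) (F : MvPolynomial ℕ+ ℚ) :
    ∃ K : ℕ, ∀ M, K ≤ M → pderiv v (psubst N F) =
      ∑ i ∈ Finset.range M, psubst N (pderiv (Nat.succPNat i) F) * pderiv v (w3q N i) := by
  induction F using MvPolynomial.induction_on with
  | C a => exact ⟨0, fun M _ => by simp [psubst]⟩
  | add p q hp hq =>
    obtain ⟨K, hK⟩ := hp
    obtain ⟨L, hL⟩ := hq
    refine ⟨max K L, fun M hM => ?_⟩
    simp only [map_add, add_mul, Finset.sum_add_distrib]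
    rw [hK M (by omega), hL M (by omega)]
  | mul_X p n hp =>
    obtain ⟨K, hK⟩ := hp
    refine ⟨max K n, fun M hM => ?_⟩
    have hx : psubst N (X n) = w3q N (n.natPred) := by
      rw [← w3_pSub]; simp [psubst]
    have hn : Nat.succPNat n.natPred = n := by simp
    have hlt : n.natPred < M := by
      have := n.natPred_add_one; omega
    have key : ∀ i, (pderiv (Nat.succPNat i)) (X n : MvPolynomial ℕ+ ℚ) =
        if i = n.natPred then 1 else 0 := by
      intro i
      rw [pderiv_X, Pi.single_apply]
      congr 1
      apply propext
      constructor
      · intro h; rw [h]; simp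
      · intro h; rw [h]; simp
    simp only [map_mul, Derivation.leibniz, smul_eq_mul, map_add, hx, key]
    rw [hK M (by omega)]
    simp only [add_mul, Finset.sum_add_distrib, Finset.mul_sum]
    have e1 : ∑ i ∈ Finset.range M, psubst N p * psubst N (if i = n.natPred then 1 else 0) *
        pderiv v (w3q N i) = psubst N p * pderiv v (w3q N n.natPred) := by
      rw [Finset.sum_eq_single n.natPred]
      · rw [if_pos rfl, map_one, mul_one]
      · intro b _ hb; rw [if_neg hb, map_zero, mul_zero, zero_mul]
      · intro h; exact absurd (Finset.mem_range.mpr hlt) h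
    rw [e1]
    simp only [mul_assoc]

lemma w3_chain (v : Fin N × Fin N) (F : MvPolynomial ℕ+ ℚ) (M : ℕ)
    (h : ∀ i, M ≤ i → pderiv (Nat.succPNat i) F = 0) : pderiv v (psubst N F) =
      ∑ i ∈ Finset.range M, psubst N (pderiv (Nat.succPNat i) F) * pderiv v (w3q N i) := by
  obtain ⟨K, hK⟩ := w3_chain_aux v F
  rw [hK (max K M) (by omega)]
  symm
  apply Finset.sum_subset
  · intro i; simp; intro hi; right; exact hi
  · intro i _ hi
    simp at hi
    rw [h i hi]; simp

lemma w3_dpow (b e : Fin N) (M n : ℕ) (hn : n ≤ M) (i j : Fin N) :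
    pderiv (b, e) ((XM N ^ n) i j) = ∑ p ∈ Finset.range M, ∑ q ∈ Finset.range M,
      if p + q + 1 = n then (XM N ^ p) i b * (XM N ^ q) e j else 0 := by
  have h1 : ∀ n, pderiv (b, e) ((XM N ^ (n + 1)) i j) = ∑ p ∈ Finset.HasAntidiagonal.antidiagonal n,
      (XM N ^ p.1) i b * (XM N ^ p.2) e j := by
    intro n
    induction n generalizing i with
    | zero =>
      simp [XM, pderiv_X, Pi.single_apply, Matrix.one_apply, Prod.ext_iff]
      split_ifs <;> simp_all
    | succ n ih =>
      rw [pow_succ', Matrix.mul_apply, map_sum]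
      simp only [Derivation.leibniz, smul_eq_mul, ih]
      rw [Finset.Nat.antidiagonal_succ, Finset.sum_add_distrib]
      simp only [Finset.sum_cons, Finset.sum_map, Function.Embedding.prodMap,
        Function.Embedding.coeFn_mk, Prod.map, pow_zero, Function.Embedding.refl_apply]
      rw [add_comm]
      congr 1
      · have : ∀ k, pderiv (b, e) (XM N i k) = if i = b then (if k = e then 1 else 0) else 0 := by
          intro k
          simp [XM, pderiv_X, Pi.single_apply, Prod.ext_iff]
          split_ifs <;> simp_all
        simp only [this, Matrix.one_apply]
        by_cases hib : i = b <;> simp [hib]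
      · simp only [Finset.mul_sum]
        rw [Finset.sum_comm]
        apply Finset.sum_congr rfl
        intro p _
        simp only [Nat.succ_eq_add_one, pow_succ' _ (p.1), Matrix.mul_apply, Finset.sum_mul]
        apply Finset.sum_congr rfl; intros; ring
  cases n with
  | zero => 
    rw [pow_zero, Matrix.one_apply]
    simp
    split_ifs <;> simp
  | succ n =>
    rw [h1, ← Finset.sum_product', ← Finset.sum_filter]
    apply Finset.sum_congr _ (fun _ _ => rfl)
    ext ⟨p, q⟩
    simp
    omega

lemma w3_dq (b e : Fin N) (k : ℕ) :
    pderiv (b, e) (w3q N k) = ((k : ℚ) + 1) • (XM N ^ k) e b := by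
  rw [w3q, Matrix.trace, map_sum]
  simp only [Matrix.diag]
  simp only [w3_dpow b e (k+1) (k+1) le_rfl]
  rw [Finset.sum_comm]
  have : ∀ p ∈ Finset.range (k+1), (∑ i : Fin N, ∑ q ∈ Finset.range (k+1),
      if p + q + 1 = k + 1 then (XM N ^ p) i b * (XM N ^ q) e i else 0) = (XM N ^ k) e b := by
    intro p hp
    rw [Finset.sum_comm]
    simp at hp
    rw [Finset.sum_eq_single (k - p)]
    · have : XM N ^ k = XM N ^ (k-p) * XM N ^ p := by rw [← pow_add]; congr 1; omega
      rw [Finset.sum_congr rfl (fun _ _ => if_pos (by omega)), this, Matrix.mul_apply]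
      apply Finset.sum_congr rfl; intros; ring
    · intro q _ hq
      apply Finset.sum_eq_zero
      intros; rw [if_neg (by omega)]
    · intro h; simp at h
  rw [Finset.sum_congr rfl this]
  simp [Algebra.smul_def]

lemma w3_contract (x A B C : Matrix (Fin N) (Fin N) (RN N)) (a b c s t u : Fin N) :
    ∑ e, ∑ f, ∑ g, x a e * x b f * x c g * (A e s * B f t * C g u) =
      (x * A) a s * (x * B) b t * (x * C) c u := by
  rw [Matrix.mul_apply, Matrix.mul_apply, Matrix.mul_apply, Finset.sum_mul_sum, Finset.sum_mul]
  apply Finset.sum_congr rfl; intro e _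
  rw [Finset.sum_mul]
  apply Finset.sum_congr rfl; intro f _
  rw [Finset.mul_sum]
  apply Finset.sum_congr rfl; intro g _
  ring

lemma w3_NOp (a b : Fin 3 → Fin N) (P : RN N) :
    NOpN N a b P = ∑ e, ∑ f, ∑ g, XM N (a 0) e * XM N (a 1) f * XM N (a 2) g *
      pderiv (b 0, e) (pderiv (b 1, f) (pderiv (b 2, g) P)) := by
  unfold NOpN
  simp only [← Finset.sum_product']
  refine Finset.sum_bij' (fun e _ => (e 0, e 1, e 2)) (fun e _ => ![e.1, e.2.1, e.2.2]) ?_ ?_ ?_ ?_ ?_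
  · simp
  · simp
  · intro e _; ext i; fin_cases i <;> rfl
  · simp
  · intro e _
    simp [Fin.prod_univ_three, List.ofFn_succ, XM]

noncomputable def w3T (Φ : Fin N → Fin N → Fin N → Fin N → Fin N → Fin N → RN N) : RN N :=
  ∑ a, ∑ b, ∑ c, ∑ e, ∑ f, ∑ g, XM N a e * XM N b f * XM N c g * Φ a b c e f g

lemma w3T_add (Φ Ψ : Fin N → Fin N → Fin N → Fin N → Fin N → Fin N → RN N) :
    w3T (fun a b c e f g => Φ a b c e f g + Ψ a b c e f g) = w3T Φ + w3T Ψ := by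
  simp only [w3T, mul_add, Finset.sum_add_distrib]

lemma w3T_mul (r : RN N) (Φ : Fin N → Fin N → Fin N → Fin N → Fin N → Fin N → RN N) :
    w3T (fun a b c e f g => r * Φ a b c e f g) = r * w3T Φ := by
  simp only [w3T, Finset.mul_sum, mul_left_comm]

lemma w3T_smul (r : ℚ) (Φ : Fin N → Fin N → Fin N → Fin N → Fin N → Fin N → RN N) :
    w3T (fun a b c e f g => r • Φ a b c e f g) = r • w3T Φ := by
  simp only [w3T, Finset.smul_sum, mul_smul_comm]

lemma w3T_zero : w3T (fun _ _ _ _ _ _ => (0 : RN N)) = 0 := by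
  simp [w3T]

lemma w3T_sum {ι : Type*} (s : Finset ι)
    (Φ : ι → Fin N → Fin N → Fin N → Fin N → Fin N → Fin N → RN N) :
    w3T (fun a b c e f g => ∑ i ∈ s, Φ i a b c e f g) = ∑ i ∈ s, w3T (Φ i) := by
  induction s using Finset.induction_on with
  | empty => simp [w3T]
  | insert i s hi ih => simp only [Finset.sum_insert hi, w3T_add, ih]

lemma w3T_ite (p : Prop) [Decidable p]
    (Φ : Fin N → Fin N → Fin N → Fin N → Fin N → Fin N → RN N) :
    w3T (fun a b c e f g => if p then Φ a b c e f g else 0) = if p then w3T Φ else 0 := by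
  split_ifs
  · rfl
  · exact w3T_zero

lemma w3_pow (k : ℕ) : XM N * XM N ^ k = XM N ^ (k + 1) := (pow_succ' _ _).symm

lemma w3_tr3 (U V W : Matrix (Fin N) (Fin N) (RN N)) :
    ∑ a, ∑ b, ∑ c, U a b * V b c * W c a = (U * V * W).trace := by
  simp only [Matrix.trace, Matrix.diag, Matrix.mul_apply, Finset.sum_mul]
  apply Finset.sum_congr rfl; intro a _
  rw [Finset.sum_comm]

lemma w3_trq (i j k : ℕ) : (XM N ^ (i+1) * XM N ^ (j+1) * XM N ^ (k+1)).trace =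
    w3q N (i + j + k + 2) := by
  rw [← pow_add, ← pow_add, w3q]; congr 2; omega

lemma w3_trq2 (i j : ℕ) : (XM N ^ (i+1) * XM N ^ (j+1)).trace = w3q N (i + j + 1) := by
  rw [← pow_add, w3q]; congr 2; omega

/- cycle a → b → c -/
lemma w3T_A (i j k : ℕ) : w3T (fun a b c e f g =>
    (XM N ^ i) e b * (XM N ^ j) f c * (XM N ^ k) g a) = w3q N (i + j + k + 2) := by
  simp only [w3T, w3_contract, w3_pow]
  rw [w3_tr3, w3_trq]

/- cycle a → c → b -/
lemma w3T_A' (i j k : ℕ) : w3T (fun a b c e f g =>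
    (XM N ^ i) e c * (XM N ^ j) f a * (XM N ^ k) g b) = w3q N (i + j + k + 2) := by
  simp only [w3T, w3_contract, w3_pow]
  have : ∀ a : Fin N, ∑ b, ∑ c, (XM N ^ (i+1)) a c * (XM N ^ (j+1)) b a * (XM N ^ (k+1)) c b
      = ∑ c, ∑ b, (XM N ^ (i+1)) a c * (XM N ^ (k+1)) c b * (XM N ^ (j+1)) b a := by
    intro a
    rw [Finset.sum_comm]
    simp only [mul_right_comm]
  simp only [this]
  rw [w3_tr3, w3_trq]
  congr 1; omega

lemma w3T_C (i j k : ℕ) : w3T (fun a b c e f g =>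
    (XM N ^ i) e a * (XM N ^ j) f b * (XM N ^ k) g c) = w3q N i * w3q N j * w3q N k := by
  simp only [w3T, w3_contract, w3_pow]
  simp only [← Finset.mul_sum, ← Finset.sum_mul]
  rfl

lemma w3_tr2 (U V : Matrix (Fin N) (Fin N) (RN N)) :
    ∑ a, ∑ b, U a b * V b a = (U * V).trace := by
  simp only [Matrix.trace, Matrix.diag, Matrix.mul_apply]

/- (a b)(c) -/
lemma w3T_B1 (i j k : ℕ) : w3T (fun a b c e f g =>
    (XM N ^ i) e b * (XM N ^ j) f a * (XM N ^ k) g c) = w3q N (i + j + 1) * w3q N k := by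
  simp only [w3T, w3_contract, w3_pow]
  simp only [← Finset.mul_sum, ← Finset.sum_mul]
  rw [w3_tr2, w3_trq2]; rfl

/- (a)(b c) -/
lemma w3T_B2 (i j k : ℕ) : w3T (fun a b c e f g =>
    (XM N ^ i) e a * (XM N ^ j) f c * (XM N ^ k) g b) = w3q N i * w3q N (j + k + 1) := by
  simp only [w3T, w3_contract, w3_pow]
  simp only [mul_assoc]
  simp only [← Finset.mul_sum, ← Finset.sum_mul]
  rw [w3_tr2, w3_trq2]; rfl

/- (a c)(b) -/
lemma w3T_B3 (i j k : ℕ) : w3T (fun a b c e f g =>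
    (XM N ^ i) e c * (XM N ^ j) f b * (XM N ^ k) g a) = w3q N (i + k + 1) * w3q N j := by
  simp only [w3T, w3_contract, w3_pow]
  simp only [mul_right_comm _ _ ((XM N ^ (k+1)) _ _)]
  have : ∀ a : Fin N, ∑ b, ∑ c, (XM N ^ (i+1)) a c * (XM N ^ (k+1)) c a * (XM N ^ (j+1)) b b
      = (∑ c, (XM N ^ (i+1)) a c * (XM N ^ (k+1)) c a) * w3q N j := by
    intro a
    rw [Finset.sum_comm]
    simp only [← Finset.mul_sum, ← Finset.sum_mul]; rfl
  simp only [this]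
  rw [← Finset.sum_mul, w3_tr2, w3_trq2]

lemma w3_leib (u : Fin N × Fin N) (F : MvPolynomial ℕ+ ℚ) (Y : RN N) (M : ℕ)
    (h : ∀ i, M ≤ i → pderiv (Nat.succPNat i) F = 0) :
    pderiv u (psubst N F * Y) = psubst N F * pderiv u Y +
    ∑ l ∈ Finset.range M, psubst N (pderiv (Nat.succPNat l) F) * (pderiv u (w3q N l) * Y) := by
  rw [Derivation.leibniz, smul_eq_mul, smul_eq_mul, w3_chain u F M h, Finset.mul_sum]
  congr 1
  apply Finset.sum_congr rfl; intros; ring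

lemma w3_d3 (u w v : Fin N × Fin N) (F : MvPolynomial ℕ+ ℚ) (M : ℕ)
    (h : ∀ i, M ≤ i → pderiv (Nat.succPNat i) F = 0) :
    pderiv u (pderiv w (pderiv v (psubst N F))) =
    ∑ k ∈ Finset.range M, psubst N (pderiv (Nat.succPNat k) F) *
        pderiv u (pderiv w (pderiv v (w3q N k))) +
    ∑ k ∈ Finset.range M, ∑ l ∈ Finset.range M,
      psubst N (pderiv (Nat.succPNat l) (pderiv (Nat.succPNat k) F)) *
        (pderiv u (w3q N l) * pderiv w (pderiv v (w3q N k)) +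
         pderiv w (w3q N l) * pderiv u (pderiv v (w3q N k)) +
         pderiv u (pderiv w (w3q N l)) * pderiv v (w3q N k)) +
    ∑ k ∈ Finset.range M, ∑ l ∈ Finset.range M, ∑ m ∈ Finset.range M,
      psubst N (pderiv (Nat.succPNat m) (pderiv (Nat.succPNat l) (pderiv (Nat.succPNat k) F))) *
        (pderiv u (w3q N m) * pderiv w (w3q N l) * pderiv v (w3q N k)) := by
  have h2 : ∀ k i, M ≤ i → pderiv (Nat.succPNat i) (pderiv (Nat.succPNat k) F) = 0 := by
    intro k i hi; rw [w3_comm, h i hi, map_zero]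
  have h3 : ∀ l k i, M ≤ i →
      pderiv (Nat.succPNat i) (pderiv (Nat.succPNat l) (pderiv (Nat.succPNat k) F)) = 0 := by
    intro l k i hi; rw [w3_comm, h2 k i hi, map_zero]
  rw [w3_chain v F M h, map_sum, map_sum, ← Finset.sum_add_distrib, ← Finset.sum_add_distrib]
  apply Finset.sum_congr rfl; intro k _
  rw [w3_leib w _ _ M (h2 k), map_add, w3_leib u _ _ M (h2 k), map_sum, add_assoc, add_assoc]
  rw [← Finset.sum_add_distrib, ← Finset.sum_add_distrib]
  refine congrArg₂ (· + ·) rfl ?_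
  apply Finset.sum_congr rfl; intro l _
  rw [w3_leib u _ _ M (h3 l k), Derivation.leibniz, smul_eq_mul, smul_eq_mul]
  have e1 : ∑ m ∈ Finset.range M, 
      psubst N (pderiv (Nat.succPNat m) (pderiv (Nat.succPNat l) (pderiv (Nat.succPNat k) F))) *
        (pderiv u (w3q N m) * (pderiv w (w3q N l) * pderiv v (w3q N k))) =
      ∑ m ∈ Finset.range M, 
      psubst N (pderiv (Nat.succPNat m) (pderiv (Nat.succPNat l) (pderiv (Nat.succPNat k) F))) *
        (pderiv u (w3q N m) * pderiv w (w3q N l) * pderiv v (w3q N k)) :=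
    Finset.sum_congr rfl fun m _ => by rw [mul_assoc (pderiv u (w3q N m))]
  rw [e1, ← add_assoc]
  refine congrArg₂ (· + ·) ?_ rfl
  rw [← mul_add]
  refine congrArg₂ (· * ·) rfl ?_
  rw [← add_assoc, mul_comm (pderiv v (w3q N k)), add_assoc]

lemma w3_ddq (M : ℕ) (b e c f : Fin N) (k : ℕ) (hk : k ≤ M) :
    pderiv (b, e) (pderiv (c, f) (w3q N k)) = ((k : ℚ) + 1) •
      ∑ i ∈ Finset.range M, ∑ j ∈ Finset.range M,
        if i + j + 1 = k then (XM N ^ i) f b * (XM N ^ j) e c else 0 := by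
  rw [w3_dq, Derivation.map_smul, w3_dpow _ _ M k hk]

lemma w3_dddq (M : ℕ) (a g b e c f : Fin N) (k : ℕ) (hk : k ≤ M) :
    pderiv (a, g) (pderiv (b, e) (pderiv (c, f) (w3q N k))) = ((k : ℚ) + 1) •
      ∑ i ∈ Finset.range M, ∑ j ∈ Finset.range M,
        if i + j + 1 = k then 
          (∑ p ∈ Finset.range M, ∑ r ∈ Finset.range M, 
            if p + r + 1 = i then (XM N ^ j) e c * (XM N ^ p) f a * (XM N ^ r) g b else 0) +
          (∑ p ∈ Finset.range M, ∑ r ∈ Finset.range M, 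
            if p + r + 1 = j then (XM N ^ i) f b * (XM N ^ p) e a * (XM N ^ r) g c else 0)
        else 0 := by
  rw [w3_ddq M _ _ _ _ _ hk, Derivation.map_smul, map_sum]
  congr 1
  apply Finset.sum_congr rfl; intro i hi
  rw [map_sum]
  apply Finset.sum_congr rfl; intro j hj
  simp only [Finset.mem_range] at hi hj
  split_ifs with h
  · rw [Derivation.leibniz, smul_eq_mul, smul_eq_mul, w3_dpow _ _ M i hi.le,
      w3_dpow _ _ M j hj.le, add_comm]
    simp only [Finset.mul_sum, mul_ite, mul_zero, mul_assoc]
  · simp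

noncomputable def w3S (N M c d : ℕ) : RN N :=
  ∑ i ∈ Finset.range M, ∑ j ∈ Finset.range M,
    if i + j + 1 = c then w3q N i * w3q N (j + d + 1) else 0

lemma w3_cB1 (M k l : ℕ) (hk : k ≤ M) :
    w3T (fun a b c e f g => pderiv (b, e) (w3q N l) * pderiv (c, f) (pderiv (a, g) (w3q N k))) =
      (((l : ℚ) + 1) * ((k : ℚ) + 1)) • w3S N M k l := by
  simp only [w3_dq _ _ l, w3_ddq M _ _ _ _ k hk, smul_mul_smul_comm, w3T_smul, Finset.mul_sum,
    w3T_sum, mul_ite, mul_zero, w3T_ite, w3S]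
  refine congrArg _ (Finset.sum_congr rfl fun i _ => Finset.sum_congr rfl fun j _ => ?_)
  have : (fun a b c e f g : Fin N => (XM N ^ l) e b * ((XM N ^ i) g c * (XM N ^ j) f a)) =
      fun a b c e f g : Fin N => (XM N ^ l) e b * (XM N ^ j) f a * (XM N ^ i) g c := by
    funext a b c e f g; ring
  rw [this, w3T_B1, mul_comm, add_comm l j]

lemma w3_cB2 (M k l : ℕ) (hk : k ≤ M) :
    w3T (fun a b c e f g => pderiv (c, f) (w3q N l) * pderiv (b, e) (pderiv (a, g) (w3q N k))) =
      (((l : ℚ) + 1) * ((k : ℚ) + 1)) • w3S N M k l := by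
  simp only [w3_dq _ _ l, w3_ddq M _ _ _ _ k hk, smul_mul_smul_comm, w3T_smul, Finset.mul_sum,
    w3T_sum, mul_ite, mul_zero, w3T_ite, w3S]
  rw [Finset.sum_comm]
  refine congrArg _ (Finset.sum_congr rfl fun i _ => Finset.sum_congr rfl fun j _ => ?_)
  have : (fun a b c e f g : Fin N => (XM N ^ l) f c * ((XM N ^ j) g b * (XM N ^ i) e a)) =
      fun a b c e f g : Fin N => (XM N ^ i) e a * (XM N ^ l) f c * (XM N ^ j) g b := by
    funext a b c e f g; ring
  rw [this, w3T_B2, add_comm l j, add_comm i j]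

lemma w3_cB3 (M k l : ℕ) (hl : l ≤ M) :
    w3T (fun a b c e f g => pderiv (b, e) (pderiv (c, f) (w3q N l)) * pderiv (a, g) (w3q N k)) =
      (((l : ℚ) + 1) * ((k : ℚ) + 1)) • w3S N M l k := by
  simp only [w3_dq _ _ k, w3_ddq M _ _ _ _ l hl, smul_mul_smul_comm, w3T_smul, Finset.sum_mul,
    w3T_sum, ite_mul, zero_mul, w3T_ite, w3S]
  refine congrArg _ (Finset.sum_congr rfl fun i _ => Finset.sum_congr rfl fun j _ => ?_)
  have : (fun a b c e f g : Fin N => (XM N ^ i) f b * (XM N ^ j) e c * (XM N ^ k) g a) =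
      fun a b c e f g : Fin N => (XM N ^ j) e c * (XM N ^ i) f b * (XM N ^ k) g a := by
    funext a b c e f g; ring
  rw [this, w3T_B3, mul_comm]

lemma w3_cA (k l m : ℕ) :
    w3T (fun a b c e f g => pderiv (b, e) (w3q N m) * pderiv (c, f) (w3q N l) *
      pderiv (a, g) (w3q N k)) =
      (((m : ℚ) + 1) * ((l : ℚ) + 1) * ((k : ℚ) + 1)) • w3q N (m + l + k + 2) := by
  simp only [w3_dq, smul_mul_smul_comm, w3T_smul, w3T_A]

lemma w3_cC (M k : ℕ) (hk : k ≤ M) :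
    w3T (fun a b c e f g => pderiv (b, e) (pderiv (c, f) (pderiv (a, g) (w3q N k)))) =
      ((k : ℚ) + 1) • ∑ i ∈ Finset.range M, ∑ j ∈ Finset.range M,
        if i + j + 1 = k then
          (∑ p ∈ Finset.range M, ∑ r ∈ Finset.range M,
            if p + r + 1 = i then w3q N (p + r + j + 2) else 0) +
          (∑ p ∈ Finset.range M, ∑ r ∈ Finset.range M,
            if p + r + 1 = j then w3q N p * w3q N r * w3q N i else 0)
        else 0 := by
  simp only [w3_dddq M _ _ _ _ _ _ k hk, w3T_smul, w3T_sum, w3T_ite, w3T_add]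
  have e1 : ∀ j p r : ℕ, w3T (fun a b c e f g : Fin N =>
      (XM N ^ j) f a * (XM N ^ p) g b * (XM N ^ r) e c) = w3q N (p + r + j + 2) := by
    intro j p r
    have : (fun a b c e f g : Fin N => (XM N ^ j) f a * (XM N ^ p) g b * (XM N ^ r) e c) =
      fun a b c e f g : Fin N => (XM N ^ r) e c * (XM N ^ j) f a * (XM N ^ p) g b := by
      funext a b c e f g; ring
    rw [this, w3T_A']
    congr 1; omega
  have e2 : ∀ i p r : ℕ, w3T (fun a b c e f g : Fin N =>
      (XM N ^ i) g c * (XM N ^ p) f b * (XM N ^ r) e a) = w3q N p * w3q N r * w3q N i := by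
    intro i p r
    have : (fun a b c e f g : Fin N => (XM N ^ i) g c * (XM N ^ p) f b * (XM N ^ r) e a) =
      fun a b c e f g : Fin N => (XM N ^ r) e a * (XM N ^ p) f b * (XM N ^ i) g c := by
      funext a b c e f g; ring
    rw [this, w3T_C, mul_comm (w3q N r)]
  simp only [e1, e2]

lemma w3_col {R : Type*} [CommRing R] (M : ℕ) (G : ℕ → R) (hG : ∀ i, M ≤ i → G i = 0)
    (f : ℕ → ℕ → R) :
    ∑ k ∈ Finset.range M, G k * (∑ i ∈ Finset.range M, ∑ j ∈ Finset.range M,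
      if i + j + 1 = k then f i j else 0) =
    ∑ i ∈ Finset.range M, ∑ j ∈ Finset.range M, G (i + j + 1) * f i j := by
  simp only [Finset.mul_sum]
  rw [Finset.sum_comm]
  apply Finset.sum_congr rfl; intro i _
  rw [Finset.sum_comm]
  apply Finset.sum_congr rfl; intro j _
  simp only [mul_ite, mul_zero]
  rw [Finset.sum_ite_eq]
  split_ifs with h
  · rfl
  · rw [hG _ (by simpa using h), zero_mul]

lemma w3_sumC (M : ℕ) (G : ℕ → RN N) (hG : ∀ i, M ≤ i → G i = 0) :
    ∑ k ∈ Finset.range M, G k * (((k : ℚ) + 1) • ∑ i ∈ Finset.range M, ∑ j ∈ Finset.range M,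
        if i + j + 1 = k then
          (∑ p ∈ Finset.range M, ∑ r ∈ Finset.range M,
            if p + r + 1 = i then w3q N (p + r + j + 2) else 0) +
          (∑ p ∈ Finset.range M, ∑ r ∈ Finset.range M,
            if p + r + 1 = j then w3q N p * w3q N r * w3q N i else 0)
        else 0) =
    ∑ a ∈ Finset.range M, ∑ b ∈ Finset.range M, ∑ c ∈ Finset.range M,
      ((a : ℚ) + b + c + 3) •
        ((w3q N a * w3q N b * w3q N c + w3q N (a + b + c + 2)) * G (a + b + c + 2)) := by
  have h1 : ∀ i, M ≤ i → (((i : ℚ) + 1) • G i) = 0 := fun i hi => by rw [hG i hi, smul_zero]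
  simp only [mul_smul_comm, ← smul_mul_assoc]
  rw [w3_col M (fun k => ((k : ℚ) + 1) • G k) h1]
  simp only [mul_add, Finset.sum_add_distrib]
  have k1 : ∀ j, ∑ i ∈ Finset.range M, ((((i + j + 1 : ℕ) : ℚ) + 1) • G (i + j + 1)) *
      (∑ p ∈ Finset.range M, ∑ r ∈ Finset.range M,
            if p + r + 1 = i then w3q N (p + r + j + 2) else 0) = 
      ∑ p ∈ Finset.range M, ∑ r ∈ Finset.range M,
       ((((p + r + 1 + j + 1 : ℕ) : ℚ) + 1) • G (p + r + 1 + j + 1)) * w3q N (p + r + j + 2) :=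
    fun j => w3_col M (fun i => (((i + j + 1 : ℕ) : ℚ) + 1) • G (i + j + 1)) 
      (fun i hi => h1 _ (by omega)) (fun p r => w3q N (p + r + j + 2))
  have k2 : ∀ i, ∑ j ∈ Finset.range M, ((((i + j + 1 : ℕ) : ℚ) + 1) • G (i + j + 1)) *
      (∑ p ∈ Finset.range M, ∑ r ∈ Finset.range M,
            if p + r + 1 = j then w3q N p * w3q N r * w3q N i else 0) = 
      ∑ p ∈ Finset.range M, ∑ r ∈ Finset.range M,
       ((((i + (p + r + 1) + 1 : ℕ) : ℚ) + 1) • G (i + (p + r + 1) + 1)) *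
        (w3q N p * w3q N r * w3q N i) :=
    fun i => w3_col M (fun j => (((i + j + 1 : ℕ) : ℚ) + 1) • G (i + j + 1)) 
      (fun j hi => h1 _ (by omega)) (fun p r => w3q N p * w3q N r * w3q N i)
  rw [Finset.sum_comm]
  simp only [k1, k2]
  rw [← Finset.sum_add_distrib]
  simp only [← Finset.sum_add_distrib]
  rw [Finset.sum_comm]
  apply Finset.sum_congr rfl; intro a _
  rw [Finset.sum_comm]
  apply Finset.sum_congr rfl; intro b _
  apply Finset.sum_congr rfl; intro c _
  rw [show a + b + 1 + c + 1 = a + b + c + 2 by omega,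
    show c + (a + b + 1) + 1 = a + b + c + 2 by omega,
    show (((a + b + c + 2 : ℕ) : ℚ) + 1) = (a : ℚ) + b + c + 3 by push_cast; ring]
  rw [← mul_add, smul_mul_assoc, mul_comm (G _), add_comm (w3q N _), smul_mul_assoc]

lemma w3_S_eq (M c d : ℕ) (hc : c ≤ M) :
    w3S N M c d = ∑ i ∈ Finset.range c, w3q N i * w3q N (c + d - i) := by
  have : ∀ i ∈ Finset.range M, (∑ j ∈ Finset.range M,
    if i + j + 1 = c then w3q N i * w3q N (j + d + 1) else 0) =
      if i < c then w3q N i * w3q N (c + d - i) else 0 := by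
    intro i _
    split_ifs with h
    · rw [Finset.sum_eq_single (c - i - 1)]
      · rw [if_pos (by omega)]; congr 2; omega
      · intro j _ hj; rw [if_neg (by omega)]
      · intro h; simp at h; omega
    · apply Finset.sum_eq_zero; intro j _; rw [if_neg (by omega)]
  rw [w3S, Finset.sum_congr rfl this, ← Finset.sum_filter]
  apply Finset.sum_congr _ (fun _ _ => rfl)
  ext i; simp; omega

lemma w3_SS (K c d : ℕ) (hc : c < K) (hd : d < K) :
    (∑ a ∈ Finset.range (2 * K), ∑ b ∈ Finset.range (2 * K),
      if a + b = c + d then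
        (1 - (if a = c then (1 : ℚ) else 0) * (if b = d then (1 : ℚ) else 0)) •
          (w3q N a * w3q N b) else 0) = w3S N K c d + w3S N K d c := by
  rw [w3_S_eq K c d hc.le, w3_S_eq K d c hd.le]
  have e1 : ∀ a ∈ Finset.range (2 * K), (∑ b ∈ Finset.range (2 * K),
      if a + b = c + d then
        (1 - (if a = c then (1 : ℚ) else 0) * (if b = d then (1 : ℚ) else 0)) •
          (w3q N a * w3q N b) else 0) = 
      if a ≤ c + d then (if a = c then 0 else w3q N a * w3q N (c + d - a)) else 0 := by
    intro a _
    by_cases h : a ≤ c + d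
    · rw [if_pos h, Finset.sum_eq_single (c + d - a)]
      · rw [if_pos (by omega)]
        by_cases hac : a = c
        · rw [if_pos hac, if_pos hac, if_pos (by omega)]; simp
        · rw [if_neg hac, if_neg hac]; simp
      · intro j _ hj; rw [if_neg (by omega)]
      · intro h; simp at h; omega
    · rw [if_neg h]
      apply Finset.sum_eq_zero; intro j _; rw [if_neg (by omega)]
  rw [Finset.sum_congr rfl e1, ← Finset.sum_filter]
  have e2 : (Finset.range (2 * K)).filter (fun a => a ≤ c + d) = Finset.range (c + (d + 1)) := by
    ext i; simp; omega
  have e3 : ∑ a ∈ (Finset.range (2 * K)).filter (fun a => a ≤ c + d),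
      (if a = c then 0 else w3q N a * w3q N (c + d - a)) = 
      ∑ a ∈ Finset.range (c + (d + 1)), (if a = c then 0 else w3q N a * w3q N (c + d - a)) := by
    apply Finset.sum_congr _ (fun _ _ => rfl)
    ext i; simp; omega
  rw [e3, Finset.sum_range_add, Finset.sum_range_succ']
  have e4 : ∑ i ∈ Finset.range c, (if i = c then 0 else w3q N i * w3q N (c + d - i)) =
      ∑ i ∈ Finset.range c, w3q N i * w3q N (c + d - i) := by
    apply Finset.sum_congr rfl; intro i hi
    simp at hi; rw [if_neg (by omega)]
  have e5 : ∑ i ∈ Finset.range d, (if c + (i + 1) = c then 0 else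
      w3q N (c + (i + 1)) * w3q N (c + d - (c + (i + 1)))) =
      ∑ i ∈ Finset.range d, w3q N i * w3q N (d + c - i) := by
    rw [← Finset.sum_range_reflect]
    apply Finset.sum_congr rfl; intro i hi
    simp at hi; rw [if_neg (by omega), mul_comm]
    congr 2 <;> omega
  rw [e4, e5]; simp

lemma w3_lhs (F : MvPolynomial ℕ+ ℚ) (K : ℕ)
    (hK : ∀ i, K ≤ i → pderiv (Nat.succPNat i) F = 0) :
    ∑ a : Fin N, ∑ b : Fin N, ∑ c : Fin N, NOpN N ![a, b, c] ![b, c, a] (psubst N F) =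
    ∑ k ∈ Finset.range K, psubst N (pderiv (Nat.succPNat k) F) *
      (((k : ℚ) + 1) • ∑ i ∈ Finset.range K, ∑ j ∈ Finset.range K,
        if i + j + 1 = k then
          (∑ p ∈ Finset.range K, ∑ r ∈ Finset.range K,
            if p + r + 1 = i then w3q N (p + r + j + 2) else 0) +
          (∑ p ∈ Finset.range K, ∑ r ∈ Finset.range K,
            if p + r + 1 = j then w3q N p * w3q N r * w3q N i else 0)
        else 0) +
    ∑ k ∈ Finset.range K, ∑ l ∈ Finset.range K,
      psubst N (pderiv (Nat.succPNat l) (pderiv (Nat.succPNat k) F)) *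
        ((((l : ℚ) + 1) * ((k : ℚ) + 1)) • w3S N K k l +
         (((l : ℚ) + 1) * ((k : ℚ) + 1)) • w3S N K k l +
         (((l : ℚ) + 1) * ((k : ℚ) + 1)) • w3S N K l k) +
    ∑ k ∈ Finset.range K, ∑ l ∈ Finset.range K, ∑ m ∈ Finset.range K,
      psubst N (pderiv (Nat.succPNat m) (pderiv (Nat.succPNat l) (pderiv (Nat.succPNat k) F))) *
        ((((m : ℚ) + 1) * ((l : ℚ) + 1) * ((k : ℚ) + 1)) • w3q N (m + l + k + 2)) := by
  have e0 : ∑ a : Fin N, ∑ b : Fin N, ∑ c : Fin N, NOpN N ![a, b, c] ![b, c, a] (psubst N F) =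
      w3T (fun a b c e f g =>
        pderiv (b, e) (pderiv (c, f) (pderiv (a, g) (psubst N F)))) := by
    simp only [w3_NOp, w3T]
    rfl
  rw [e0]
  simp only [w3_d3 _ _ _ F K hK]
  rw [w3T_add, w3T_add]
  simp only [w3T_sum, w3T_mul, w3T_add, w3_cA]
  refine congrArg₂ (· + ·) (congrArg₂ (· + ·) ?_ ?_) rfl
  · apply Finset.sum_congr rfl; intro k hk
    rw [w3_cC K k (Finset.mem_range.mp hk).le]
  · apply Finset.sum_congr rfl; intro k hk
    apply Finset.sum_congr rfl; intro l hl
    rw [w3_cB1 K k l (Finset.mem_range.mp hk).le, w3_cB2 K k l (Finset.mem_range.mp hk).le,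
      w3_cB3 K k l (Finset.mem_range.mp hl).le]

lemma w3_rhs1 (F : MvPolynomial ℕ+ ℚ) (K : ℕ)
    (hK : ∀ i, K ≤ i → pderiv (Nat.succPNat i) F = 0) :
    (∑ᶠ a : ℕ+, ∑ᶠ b : ℕ+, ∑ᶠ c : ℕ+,
          (((a : ℕ) : ℚ) * ((b : ℕ) : ℚ) * ((c : ℕ) : ℚ)) •
            ((X (a + b + c) : MvPolynomial ℕ+ ℚ) * pderiv a (pderiv b (pderiv c F)))) =
    ∑ m ∈ Finset.range K, ∑ l ∈ Finset.range K, ∑ k ∈ Finset.range K,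
      (((m : ℚ) + 1) * ((l : ℚ) + 1) * ((k : ℚ) + 1)) •
        (X (Nat.succPNat (m + l + k + 2)) *
      pderiv (Nat.succPNat m) (pderiv (Nat.succPNat l) (pderiv (Nat.succPNat k) F))) := by
  have h2 : ∀ k i, K ≤ i → pderiv (Nat.succPNat i) (pderiv k F) = 0 := by
    intro k i hi; rw [w3_comm, hK i hi, map_zero]
  have h3 : ∀ l k i, K ≤ i → pderiv (Nat.succPNat i) (pderiv l (pderiv k F)) = 0 := by
    intro l k i hi; rw [w3_comm, h2 k i hi, map_zero]
  rw [w3_finsum K]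
  swap
  · intro i hi
    simp only [h3 _ _ i hi, mul_zero, smul_zero, finsum_zero]
  apply Finset.sum_congr rfl; intro m _
  rw [w3_finsum K]
  swap
  · intro i hi
    simp only [h2 _ i hi, map_zero, mul_zero, smul_zero, finsum_zero]
  apply Finset.sum_congr rfl; intro l _
  rw [w3_finsum K]
  swap
  · intro i hi
    simp only [hK i hi, map_zero, mul_zero, smul_zero]
  apply Finset.sum_congr rfl; intro k _
  have e : Nat.succPNat m + Nat.succPNat l + Nat.succPNat k = Nat.succPNat (m + l + k + 2) := by
    apply PNat.coe_injective
    simp only [PNat.add_coe, Nat.succPNat_coe]; omega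
  rw [e]
  simp only [Nat.succPNat_coe, Nat.succ_eq_add_one, Nat.cast_add, Nat.cast_one]

lemma w3_rhs2 (F : MvPolynomial ℕ+ ℚ) (K : ℕ)
    (hK : ∀ i, K ≤ i → pderiv (Nat.succPNat i) F = 0) :
    (∑ᶠ a : ℕ+, ∑ᶠ b : ℕ+, ∑ᶠ c : ℕ+, ∑ᶠ d : ℕ+,
          if a + b = c + d then
            (((c : ℕ) : ℚ) * ((d : ℕ) : ℚ) *
                (1 - (if a = c then (1 : ℚ) else 0) * (if b = d then (1 : ℚ) else 0))) •
              ((X a : MvPolynomial ℕ+ ℚ) * X b * pderiv c (pderiv d F))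
          else 0) =
    ∑ a ∈ Finset.range (2 * K), ∑ b ∈ Finset.range (2 * K), ∑ c ∈ Finset.range K,
      ∑ d ∈ Finset.range K,
      if a + b = c + d then
        (((c : ℚ) + 1) * ((d : ℚ) + 1) *
          (1 - (if a = c then (1 : ℚ) else 0) * (if b = d then (1 : ℚ) else 0))) •
          (X (Nat.succPNat a) * X (Nat.succPNat b) *
            pderiv (Nat.succPNat c) (pderiv (Nat.succPNat d) F))
      else 0 := by
  have h2 : ∀ k i, K ≤ i → pderiv (Nat.succPNat i) (pderiv k F) = 0 := by
    intro k i hi; rw [w3_comm, hK i hi, map_zero]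
  have in1 : ∀ a b c : ℕ+, (∑ᶠ d : ℕ+,
          if a + b = c + d then
            (((c : ℕ) : ℚ) * ((d : ℕ) : ℚ) *
                (1 - (if a = c then (1 : ℚ) else 0) * (if b = d then (1 : ℚ) else 0))) •
              ((X a : MvPolynomial ℕ+ ℚ) * X b * pderiv c (pderiv d F))
          else 0) = ∑ d ∈ Finset.range K, if a + b = c + Nat.succPNat d then
            (((c : ℕ) : ℚ) * (((Nat.succPNat d) : ℕ) : ℚ) *
                (1 - (if a = c then (1 : ℚ) else 0) *
                  (if b = Nat.succPNat d then (1 : ℚ) else 0))) •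
              ((X a : MvPolynomial ℕ+ ℚ) * X b * pderiv c (pderiv (Nat.succPNat d) F))
          else 0 := by
    intro a b c
    apply w3_finsum K
    intro i hi
    simp only [hK i hi, map_zero, mul_zero, smul_zero, ite_self]
  simp only [in1]
  have in2 : ∀ a b : ℕ+, (∑ᶠ c : ℕ+, ∑ d ∈ Finset.range K, if a + b = c + Nat.succPNat d then
            (((c : ℕ) : ℚ) * (((Nat.succPNat d) : ℕ) : ℚ) *
                (1 - (if a = c then (1 : ℚ) else 0) *
                  (if b = Nat.succPNat d then (1 : ℚ) else 0))) •
              ((X a : MvPolynomial ℕ+ ℚ) * X b * pderiv c (pderiv (Nat.succPNat d) F))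
          else 0) = ∑ c ∈ Finset.range K, ∑ d ∈ Finset.range K,
          if a + b = Nat.succPNat c + Nat.succPNat d then
            ((((Nat.succPNat c) : ℕ) : ℚ) * (((Nat.succPNat d) : ℕ) : ℚ) *
                (1 - (if a = Nat.succPNat c then (1 : ℚ) else 0) *
                  (if b = Nat.succPNat d then (1 : ℚ) else 0))) •
              ((X a : MvPolynomial ℕ+ ℚ) * X b *
                pderiv (Nat.succPNat c) (pderiv (Nat.succPNat d) F))
          else 0 := by
    intro a b
    apply w3_finsum K
    intro i hi
    simp only [h2 _ i hi, mul_zero, smul_zero, ite_self, Finset.sum_const_zero]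
  simp only [in2]
  have inj : ∀ a b c d : ℕ, (Nat.succPNat a + Nat.succPNat b = Nat.succPNat c + Nat.succPNat d)
      ↔ a + b = c + d := by
    intro a b c d
    rw [← PNat.coe_inj]
    simp only [PNat.add_coe, Nat.succPNat_coe]; omega
  rw [w3_finsum (2 * K)]
  swap
  · intro i hi
    apply finsum_eq_zero_of_forall_eq_zero
    intro b
    apply Finset.sum_eq_zero; intro c hc
    apply Finset.sum_eq_zero; intro d hd
    rw [if_neg]
    intro h
    have := congrArg (fun x : ℕ+ => (x : ℕ)) h
    simp only [PNat.add_coe, Nat.succPNat_coe, Finset.mem_range] at this hc hd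
    have := b.pos
    omega
  apply Finset.sum_congr rfl; intro a _
  rw [w3_finsum (2 * K)]
  swap
  · intro i hi
    apply Finset.sum_eq_zero; intro c hc
    apply Finset.sum_eq_zero; intro d hd
    rw [if_neg]
    rw [inj]
    simp only [Finset.mem_range] at hc hd
    omega
  apply Finset.sum_congr rfl; intro b _
  apply Finset.sum_congr rfl; intro c _
  apply Finset.sum_congr rfl; intro d _
  simp only [inj, Nat.succPNat_inj, Nat.succPNat_coe, Nat.succ_eq_add_one, Nat.cast_add,
    Nat.cast_one]

lemma w3_rhs3 (F : MvPolynomial ℕ+ ℚ) (K : ℕ)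
    (hK : ∀ i, K ≤ i → pderiv (Nat.succPNat i) F = 0) :
    (∑ᶠ a : ℕ+, ∑ᶠ b : ℕ+, ∑ᶠ c : ℕ+,
          (((a : ℕ) : ℚ) + ((b : ℕ) : ℚ) + ((c : ℕ) : ℚ)) •
            (((X a : MvPolynomial ℕ+ ℚ) * X b * X c + X (a + b + c)) *
              pderiv (a + b + c) F)) =
    ∑ a ∈ Finset.range K, ∑ b ∈ Finset.range K, ∑ c ∈ Finset.range K,
      ((a : ℚ) + b + c + 3) •
        ((X (Nat.succPNat a) * X (Nat.succPNat b) * X (Nat.succPNat c) +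
          X (Nat.succPNat (a + b + c + 2))) * pderiv (Nat.succPNat (a + b + c + 2)) F) := by
  have hz : ∀ x : ℕ+, K < x → pderiv x F = 0 := by
    intro x hx
    have := hK x.natPred (by have := x.natPred_add_one; omega)
    simpa using this
  rw [w3_finsum K]
  swap
  · intro i hi
    apply finsum_eq_zero_of_forall_eq_zero
    intro b
    apply finsum_eq_zero_of_forall_eq_zero
    intro c
    rw [hz, mul_zero, smul_zero]
    simp only [PNat.add_coe, Nat.succPNat_coe]; omega
  apply Finset.sum_congr rfl; intro a _
  rw [w3_finsum K]
  swap
  · intro i hi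
    apply finsum_eq_zero_of_forall_eq_zero
    intro c
    rw [hz, mul_zero, smul_zero]
    simp only [PNat.add_coe, Nat.succPNat_coe]; omega
  apply Finset.sum_congr rfl; intro b _
  rw [w3_finsum K]
  swap
  · intro i hi
    rw [hz, mul_zero, smul_zero]
    simp only [PNat.add_coe, Nat.succPNat_coe]; omega
  apply Finset.sum_congr rfl; intro c _
  have e : Nat.succPNat a + Nat.succPNat b + Nat.succPNat c = Nat.succPNat (a + b + c + 2) := by
    apply PNat.coe_injective
    simp only [PNat.add_coe, Nat.succPNat_coe]; omega
  rw [e]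
  refine congrArg₂ (· • ·) ?_ rfl
  simp only [Nat.succPNat_coe, Nat.succ_eq_add_one, Nat.cast_add, Nat.cast_one]
  ring

lemma w3_psX (i : ℕ) : psubst N (X (Nat.succPNat i)) = w3q N i := by
  rw [← w3_pSub]; simp [psubst]

lemma w3_psum1 (F : MvPolynomial ℕ+ ℚ) (K : ℕ) :
    psubst N (∑ m ∈ Finset.range K, ∑ l ∈ Finset.range K, ∑ k ∈ Finset.range K,
      (((m : ℚ) + 1) * ((l : ℚ) + 1) * ((k : ℚ) + 1)) •
        (X (Nat.succPNat (m + l + k + 2)) *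
      pderiv (Nat.succPNat m) (pderiv (Nat.succPNat l) (pderiv (Nat.succPNat k) F)))) =
    ∑ k ∈ Finset.range K, ∑ l ∈ Finset.range K, ∑ m ∈ Finset.range K,
      psubst N (pderiv (Nat.succPNat m) (pderiv (Nat.succPNat l) (pderiv (Nat.succPNat k) F))) *
        ((((m : ℚ) + 1) * ((l : ℚ) + 1) * ((k : ℚ) + 1)) • w3q N (m + l + k + 2)) := by
  simp only [map_sum, map_smul, map_mul, w3_psX]
  have e : ∀ l, ∑ k ∈ Finset.range K, ∑ m ∈ Finset.range K,
      psubst N (pderiv (Nat.succPNat m) (pderiv (Nat.succPNat l) (pderiv (Nat.succPNat k) F))) *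
        ((((m : ℚ) + 1) * ((l : ℚ) + 1) * ((k : ℚ) + 1)) • w3q N (m + l + k + 2)) = 
    ∑ m ∈ Finset.range K, ∑ k ∈ Finset.range K,
      psubst N (pderiv (Nat.succPNat m) (pderiv (Nat.succPNat l) (pderiv (Nat.succPNat k) F))) *
        ((((m : ℚ) + 1) * ((l : ℚ) + 1) * ((k : ℚ) + 1)) • w3q N (m + l + k + 2)) := 
    fun l => Finset.sum_comm
  rw [Finset.sum_comm (s := Finset.range K)]
  conv_rhs => rw [Finset.sum_comm]
  simp only [e]
  apply Finset.sum_congr rfl; intro l _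
  apply Finset.sum_congr rfl; intro m _
  apply Finset.sum_congr rfl; intro k _
  rw [mul_smul_comm, mul_comm (w3q N _)]

lemma w3_psum3 (F : MvPolynomial ℕ+ ℚ) (K : ℕ) :
    psubst N (∑ a ∈ Finset.range K, ∑ b ∈ Finset.range K, ∑ c ∈ Finset.range K,
      ((a : ℚ) + b + c + 3) •
        ((X (Nat.succPNat a) * X (Nat.succPNat b) * X (Nat.succPNat c) +
          X (Nat.succPNat (a + b + c + 2))) * pderiv (Nat.succPNat (a + b + c + 2)) F)) =
    ∑ a ∈ Finset.range K, ∑ b ∈ Finset.range K, ∑ c ∈ Finset.range K,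
      ((a : ℚ) + b + c + 3) •
        ((w3q N a * w3q N b * w3q N c + w3q N (a + b + c + 2)) *
          psubst N (pderiv (Nat.succPNat (a + b + c + 2)) F)) := by
  simp only [map_sum, map_smul, map_mul, map_add, w3_psX]

lemma w3_fin2 (F : MvPolynomial ℕ+ ℚ) (K : ℕ) :
    (1/2 : ℚ) • psubst N (∑ a ∈ Finset.range (2 * K), ∑ b ∈ Finset.range (2 * K),
      ∑ c ∈ Finset.range K, ∑ d ∈ Finset.range K,
      if a + b = c + d then
        (((c : ℚ) + 1) * ((d : ℚ) + 1) *
          (1 - (if a = c then (1 : ℚ) else 0) * (if b = d then (1 : ℚ) else 0))) •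
          (X (Nat.succPNat a) * X (Nat.succPNat b) *
            pderiv (Nat.succPNat c) (pderiv (Nat.succPNat d) F))
      else 0) =
    (1/3 : ℚ) • ∑ k ∈ Finset.range K, ∑ l ∈ Finset.range K,
      psubst N (pderiv (Nat.succPNat l) (pderiv (Nat.succPNat k) F)) *
        ((((l : ℚ) + 1) * ((k : ℚ) + 1)) • w3S N K k l +
         (((l : ℚ) + 1) * ((k : ℚ) + 1)) • w3S N K k l +
         (((l : ℚ) + 1) * ((k : ℚ) + 1)) • w3S N K l k) := by
  set H : ℕ → ℕ → RN N := fun k l => (((l : ℚ) + 1) * ((k : ℚ) + 1)) •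
    psubst N (pderiv (Nat.succPNat l) (pderiv (Nat.succPNat k) F)) with hH
  have hs : ∀ k l, H k l = H l k := by
    intro k l
    simp only [hH]
    rw [w3_comm, mul_comm ((l : ℚ) + 1)]
  have swap : ∑ k ∈ Finset.range K, ∑ l ∈ Finset.range K, H k l * w3S N K l k =
      ∑ k ∈ Finset.range K, ∑ l ∈ Finset.range K, H k l * w3S N K k l := by
    rw [Finset.sum_comm]
    apply Finset.sum_congr rfl; intro k _
    apply Finset.sum_congr rfl; intro l _
    rw [hs]
  have lhs : psubst N (∑ a ∈ Finset.range (2 * K), ∑ b ∈ Finset.range (2 * K),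
      ∑ c ∈ Finset.range K, ∑ d ∈ Finset.range K,
      if a + b = c + d then
        (((c : ℚ) + 1) * ((d : ℚ) + 1) *
          (1 - (if a = c then (1 : ℚ) else 0) * (if b = d then (1 : ℚ) else 0))) •
          (X (Nat.succPNat a) * X (Nat.succPNat b) *
            pderiv (Nat.succPNat c) (pderiv (Nat.succPNat d) F))
      else 0) = ∑ c ∈ Finset.range K, ∑ d ∈ Finset.range K,
        (H c d * w3S N K c d + H c d * w3S N K d c) := by
    have c1 : ∀ f : ℕ → ℕ → ℕ → ℕ → MvPolynomial ℕ+ ℚ,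
      ∑ a ∈ Finset.range (2 * K), ∑ b ∈ Finset.range (2 * K),
      ∑ c ∈ Finset.range K, ∑ d ∈ Finset.range K, f a b c d = 
      ∑ c ∈ Finset.range K, ∑ d ∈ Finset.range K, 
      ∑ a ∈ Finset.range (2 * K), ∑ b ∈ Finset.range (2 * K), f a b c d := by
      intro f
      have s1 : ∀ a, ∑ b ∈ Finset.range (2 * K), ∑ c ∈ Finset.range K, ∑ d ∈ Finset.range K,
          f a b c d = ∑ c ∈ Finset.range K, ∑ d ∈ Finset.range K,
          ∑ b ∈ Finset.range (2 * K), f a b c d := by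
        intro a
        rw [Finset.sum_comm]
        apply Finset.sum_congr rfl; intro c _
        rw [Finset.sum_comm]
      simp only [s1]
      rw [Finset.sum_comm]
      apply Finset.sum_congr rfl; intro c _
      rw [Finset.sum_comm]
    rw [c1]
    simp only [map_sum]
    apply Finset.sum_congr rfl; intro c hc
    apply Finset.sum_congr rfl; intro d hd
    rw [← mul_add, ← w3_SS K c d (Finset.mem_range.mp hc) (Finset.mem_range.mp hd), Finset.mul_sum]
    apply Finset.sum_congr rfl; intro a _
    rw [Finset.mul_sum]
    apply Finset.sum_congr rfl; intro b _
    by_cases h : a + b = c + d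
    · rw [if_pos h, if_pos h, map_smul, map_mul, map_mul, w3_psX, w3_psX, hs]
      simp only [hH]
      rw [smul_mul_smul_comm, mul_comm (w3q N a * _)]
    · rw [if_neg h, if_neg h, map_zero, mul_zero]
  have rhs : ∀ k l : ℕ, psubst N (pderiv (Nat.succPNat l) (pderiv (Nat.succPNat k) F)) *
        ((((l : ℚ) + 1) * ((k : ℚ) + 1)) • w3S N K k l +
         (((l : ℚ) + 1) * ((k : ℚ) + 1)) • w3S N K k l +
         (((l : ℚ) + 1) * ((k : ℚ) + 1)) • w3S N K l k) = 
      H k l * w3S N K k l + H k l * w3S N K k l + H k l * w3S N K l k := by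
    intro k l
    simp only [hH, mul_add, mul_smul_comm, smul_mul_assoc]
  rw [lhs]
  simp only [rhs, Finset.sum_add_distrib, swap]
  module

end helpers

theorem W3_in_power_sum_coordinates (N : ℕ) (hN : 1 ≤ N) (F : MvPolynomial ℕ+ ℚ) :
    (1/3 : ℚ) • ∑ a : Fin N, ∑ b : Fin N, ∑ c : Fin N,
        NOpN N ![a, b, c] ![b, c, a] (psubst N F) =
      psubst N (
        (1/3 : ℚ) • (∑ᶠ a : ℕ+, ∑ᶠ b : ℕ+, ∑ᶠ c : ℕ+,
          (((a : ℕ) : ℚ) * ((b : ℕ) : ℚ) * ((c : ℕ) : ℚ)) •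
            (MvPolynomial.X (a + b + c) *
              MvPolynomial.pderiv a (MvPolynomial.pderiv b (MvPolynomial.pderiv c F)))) +
        (1/2 : ℚ) • (∑ᶠ a : ℕ+, ∑ᶠ b : ℕ+, ∑ᶠ c : ℕ+, ∑ᶠ d : ℕ+,
          if a + b = c + d then
            (((c : ℕ) : ℚ) * ((d : ℕ) : ℚ) *
                (1 - (if a = c then (1 : ℚ) else 0) * (if b = d then (1 : ℚ) else 0))) •
              (MvPolynomial.X a * MvPolynomial.X b *
                MvPolynomial.pderiv c (MvPolynomial.pderiv d F))
          else 0) +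
        (1/3 : ℚ) • (∑ᶠ a : ℕ+, ∑ᶠ b : ℕ+, ∑ᶠ c : ℕ+,
          (((a : ℕ) : ℚ) + ((b : ℕ) : ℚ) + ((c : ℕ) : ℚ)) •
            ((MvPolynomial.X a * MvPolynomial.X b * MvPolynomial.X c +
                MvPolynomial.X (a + b + c)) *
              MvPolynomial.pderiv (a + b + c) F))) := by
  obtain ⟨K, hK⟩ := w3_vanish F
  have h2 : ∀ k i, K ≤ i → pderiv (Nat.succPNat i) (pderiv k F) = 0 := by
    intro k i hi; rw [w3_comm, hK i hi, map_zero]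
  have h3 : ∀ l k i, K ≤ i → pderiv (Nat.succPNat i) (pderiv l (pderiv k F)) = 0 := by
    intro l k i hi; rw [w3_comm, h2 k i hi, map_zero]
  rw [w3_lhs F K hK, w3_rhs1 F K hK, w3_rhs2 F K hK, w3_rhs3 F K hK]
  simp only [map_add, map_smul]
  rw [w3_psum1, w3_psum3, w3_fin2 F K]
  rw [w3_sumC K (fun i => psubst N (pderiv (Nat.succPNat i) F))
    (fun i hi => by rw [hK i hi, map_zero])]
  module
end

section
/- The restriction of 𝒲([2,1]) to symmetric functions is given in power-sum coordinates by: for every polynomial F in p₁, p₂, … and every N ≥ 1, (1/2)·Σ_{a,b,c=1}^N :D_{ab}D_{ba}D_{cc}:(F(p(X))) equals the value at p = p(X) of [(1/2)Σ_{a,b≥1} (a+b)(a+b−2)·p_a p_b·∂/∂p_{a+b} + (1/2)Σ_{a,b≥1} a·b·(a+b−2)·p_{a+b}·∂²/(∂p_a∂p_b) + (1/2)Σ_{a,b,c≥1} (a+b)·c·p_a p_b p_c·∂²/(∂p_{a+b}∂p_c) + (1/2)Σ_{a,b,c≥1} a·b·c·p_a p_{b+c}·∂³/(∂p_a∂p_b∂p_c)]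 F. -/
open scoped Classical
open MvPolynomial

theorem pow_pderiv (N : ℕ) (n : ℕ) (b e f a : Fin N) :
    pderiv (b, e) ((XM N ^ n) f a) =
      ∑ i ∈ Finset.range n, (XM N ^ i) f b * (XM N ^ (n - 1 - i)) e a := by
  induction n generalizing a with
  | zero =>
    rw [pow_zero, Matrix.one_apply]
    split_ifs <;> simp
  | succ n ih =>
    rw [pow_succ, Matrix.mul_apply, map_sum]
    simp only [Derivation.leibniz, smul_eq_mul, ih]
    rw [Finset.sum_add_distrib, Finset.sum_range_succ, add_comm]
    congr 1
    · simp only [Finset.mul_sum]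
      rw [Finset.sum_comm]
      refine Finset.sum_congr rfl fun i hi => ?_
      have : n + 1 - 1 - i = (n - 1 - i) + 1 := by
        have := Finset.mem_range.1 hi; omega
      rw [this, pow_succ, Matrix.mul_apply, Finset.mul_sum]
      refine Finset.sum_congr rfl fun j _ => ?_
      ring
    · have h : ∀ x, pderiv (b, e) (XM N x a) = if x = b then (if e = a then (1 : RN N) else 0) else 0 := by
        intro x
        simp only [XM, Matrix.of_apply, pderiv_X, Pi.single_apply, Prod.mk.injEq]
        by_cases h1 : x = b
        · by_cases h2 : e = a
          · rw [if_pos h1, if_pos h2, if_pos ⟨h1, h2.symm⟩]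
          · rw [if_pos h1, if_neg h2, if_neg (fun h => h2 h.2.symm)]
        · rw [if_neg h1, if_neg (fun h => h1 h.1)]
      simp only [h]
      simp [Matrix.one_apply]

theorem tr_pderiv (N : ℕ) (k : ℕ+) (a f : Fin N) :
    pderiv (a, f) (pSub N k) = ((k : ℕ) : RN N) * (XM N ^ ((k : ℕ) - 1)) f a := by
  simp only [pSub, Matrix.trace, Matrix.diag, map_sum, pow_pderiv]
  rw [Finset.sum_comm]
  rw [Finset.sum_congr rfl (g := fun _ => (XM N ^ ((k : ℕ) - 1)) f a)]
  · simp
  · intro i hi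
    have : (k : ℕ) - 1 = ((k : ℕ) - 1 - i) + i := by
      have := Finset.mem_range.1 hi; omega
    conv_rhs => rw [this, pow_add, Matrix.mul_apply]
    exact Finset.sum_congr rfl fun j _ => mul_comm _ _

theorem XM_eq (N : ℕ) (i j : Fin N) : (X (i, j) : RN N) = XM N i j := rfl

theorem E_p (N : ℕ) (k : ℕ+) :
    ∑ c, ∑ e, X (c, e) * pderiv (c, e) (pSub N k) = ((k : ℕ) : RN N) * pSub N k := by
  simp only [tr_pderiv, XM_eq]
  rw [pSub, Matrix.trace, Finset.mul_sum]
  refine Finset.sum_congr rfl fun c _ => ?_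
  have : (k : ℕ) = ((k : ℕ) - 1) + 1 := by have := k.pos; omega
  conv_rhs => rw [Matrix.diag, this, pow_succ', Matrix.mul_apply, ← this, Finset.mul_sum]
  exact Finset.sum_congr rfl fun j _ => by ring

/-- the `:tr D^2:` contraction -/
noncomputable def W2 (N : ℕ) (P : RN N) : RN N :=
  ∑ a, ∑ b, ∑ e, ∑ f, X (a, e) * X (b, f) * pderiv (b, e) (pderiv (a, f) P)

theorem chain_rule (N : ℕ) (v : Fin N × Fin N) (G : MvPolynomial ℕ+ ℚ) :
    ∃ S0 : Finset ℕ+, ∀ S, S0 ⊆ S →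
      pderiv v (psubst N G) = ∑ k ∈ S, pderiv v (pSub N k) * psubst N (pderiv k G) := by
  induction G using MvPolynomial.induction_on with
  | C a => exact ⟨∅, fun S _ => by simp [psubst]⟩
  | add p q hp hq =>
    obtain ⟨S1, h1⟩ := hp
    obtain ⟨S2, h2⟩ := hq
    refine ⟨S1 ∪ S2, fun S hS => ?_⟩
    rw [map_add, map_add, h1 S (Finset.union_subset_left hS), h2 S (Finset.union_subset_right hS),
      ← Finset.sum_add_distrib]
    exact Finset.sum_congr rfl fun j _ => by simp only [map_add]; ring
  | mul_X p i hp =>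
    obtain ⟨S1, h1⟩ := hp
    refine ⟨S1 ∪ {i}, fun S hS => ?_⟩
    have hi : i ∈ S := hS (by simp)
    have hX : psubst N (X i) = pSub N i := by simp [psubst]
    simp only [map_mul, Derivation.leibniz, h1 S (Finset.union_subset_left hS), smul_eq_mul,
      map_add, mul_add, Finset.sum_add_distrib, hX, pderiv_X]
    congr 1
    · rw [Finset.sum_eq_single i]
      · simp; ring
      · intro b _ hb; simp [hb.symm]
      · exact fun h => absurd hi h
    · rw [Finset.mul_sum]
      exact Finset.sum_congr rfl fun j _ => by ring

def Sup (S : Finset ℕ+) (G : MvPolynomial ℕ+ ℚ) : Prop := ∀ k, k ∉ S → pderiv k G = 0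

theorem pd_comm {σ : Type*} (i j : σ) (G : MvPolynomial σ ℚ) :
    pderiv i (pderiv j G) = pderiv j (pderiv i G) := by
  have h : ⁅pderiv (R := ℚ) i, pderiv (R := ℚ) j⁆ = 0 := by
    apply MvPolynomial.derivation_ext
    intro k
    simp only [Derivation.commutator_apply, pderiv_X, Pi.single_apply, Derivation.coe_zero, Pi.zero_apply]
    split_ifs <;> simp
  have := congrArg (fun D => D G) h
  simpa [Derivation.commutator_apply, sub_eq_zero] using this

theorem Sup.pd {S G} (h : Sup S G) (j : ℕ+) : Sup S (pderiv j G) := fun k hk => by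
  rw [pd_comm, h k hk, map_zero]

theorem chain_rule' (N : ℕ) (v : Fin N × Fin N) {G : MvPolynomial ℕ+ ℚ} {S : Finset ℕ+}
    (h : Sup S G) :
      pderiv v (psubst N G) = ∑ k ∈ S, pderiv v (pSub N k) * psubst N (pderiv k G) := by
  obtain ⟨S0, h0⟩ := chain_rule N v G
  rw [h0 (S0 ∪ S) Finset.subset_union_left]
  symm
  apply Finset.sum_subset Finset.subset_union_right
  intro k _ hk
  rw [h k hk]; simp

theorem c4 {M : Type*} [AddCommMonoid M] {ι κ : Type*} [Fintype ι] (T : Finset κ)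
    (g : ι → ι → ι → ι → κ → M) :
      ∑ a, ∑ b, ∑ e, ∑ f, ∑ k ∈ T, g a b e f k = ∑ k ∈ T, ∑ a, ∑ b, ∑ e, ∑ f, g a b e f k := by
  symm
  rw [Finset.sum_comm]
  refine Finset.sum_congr rfl fun a _ => ?_
  rw [Finset.sum_comm]
  refine Finset.sum_congr rfl fun b _ => ?_
  rw [Finset.sum_comm]
  refine Finset.sum_congr rfl fun e _ => ?_
  rw [Finset.sum_comm]

theorem cg4 {M : Type*} [AddCommMonoid M] {ι : Type*} [Fintype ι]
    {g h : ι → ι → ι → ι → M} (H : ∀ a b e f, g a b e f = h a b e f) :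
      ∑ a, ∑ b, ∑ e, ∑ f, g a b e f = ∑ a, ∑ b, ∑ e, ∑ f, h a b e f := by
  simp only [H]

theorem add4 {M : Type*} [AddCommMonoid M] {ι : Type*} [Fintype ι]
    (g h : ι → ι → ι → ι → M) :
      ∑ a, ∑ b, ∑ e, ∑ f, (g a b e f + h a b e f) =
      ∑ a, ∑ b, ∑ e, ∑ f, g a b e f + ∑ a, ∑ b, ∑ e, ∑ f, h a b e f := by
  simp only [Finset.sum_add_distrib]

theorem mul4 {M : Type*} [CommSemiring M] {ι : Type*} [Fintype ι]
    (g : ι → ι → ι → ι → M) (c : M) :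
      ∑ a, ∑ b, ∑ e, ∑ f, (g a b e f * c) = (∑ a, ∑ b, ∑ e, ∑ f, g a b e f) * c := by
  simp only [Finset.sum_mul]

theorem W2_p (N : ℕ) (k : ℕ+) : W2 N (pSub N k) =
    ((k : ℕ) : RN N) * ∑ i ∈ Finset.range ((k : ℕ) - 1),
      Matrix.trace (XM N ^ (i + 1)) * Matrix.trace (XM N ^ ((k : ℕ) - 1 - i)) := by
  have h : ∀ a b e f, X (a, e) * X (b, f) * pderiv (b, e) (pderiv (a, f) (pSub N k)) =
     ((k : ℕ) : RN N) * ∑ i ∈ Finset.range ((k : ℕ) - 1),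
      ((XM N ^ i) f b * XM N b f) * ((XM N ^ ((k : ℕ) - 1 - 1 - i)) e a * XM N a e) := by
    intro a b e f
    rw [tr_pderiv, Derivation.leibniz]
    simp only [pow_pderiv, XM_eq, smul_eq_mul, Derivation.map_natCast, mul_zero, add_zero, Finset.mul_sum]
    exact Finset.sum_congr rfl fun i _ => by ring
  have ht : ∀ i, Matrix.trace (XM N ^ (i + 1)) = ∑ b, ∑ f, (XM N ^ i) f b * XM N b f := by
    intro i
    rw [pow_succ, Matrix.trace, Finset.sum_comm]
    simp only [Matrix.diag, Matrix.mul_apply]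
  rw [W2, cg4 h]
  simp only [mul_comm (((k : ℕ) : RN N))]
  rw [mul4]
  congr 1
  have hr : ∀ i ∈ Finset.range ((k : ℕ) - 1), Matrix.trace (XM N ^ (i + 1)) * Matrix.trace (XM N ^ ((k : ℕ) - 1 - i)) = ∑ a, ∑ b, ∑ e, ∑ f, ((XM N ^ i) f b * XM N b f) * ((XM N ^ ((k : ℕ) - 1 - 1 - i)) e a * XM N a e) := by
    intro i hi
    have : (k : ℕ) - 1 - i = ((k : ℕ) - 1 - 1 - i) + 1 := by
      have := Finset.mem_range.1 hi; omega
    rw [this, ht, ht, mul_comm, Finset.sum_mul]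
    refine Finset.sum_congr rfl fun a _ => ?_
    rw [Finset.mul_sum]
    refine Finset.sum_congr rfl fun b _ => ?_
    rw [Finset.sum_mul]
    refine Finset.sum_congr rfl fun e _ => ?_
    rw [Finset.mul_sum]
    refine Finset.sum_congr rfl fun f _ => ?_
    ring
  rw [Finset.sum_congr rfl hr]
  exact c4 _ _

theorem W2_cross (N : ℕ) (j k : ℕ+) :
    ∑ a, ∑ b, ∑ e, ∑ f, X (a, e) * X (b, f) * (pderiv (b, e) (pSub N j) * pderiv (a, f) (pSub N k)) =
    ((j : ℕ) : RN N) * ((k : ℕ) : RN N) * pSub N (j + k) := by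
  have h : (((j + k : ℕ+)) : ℕ) = ((j : ℕ) - 1 + 1) + ((k : ℕ) - 1 + 1) := by
    have := j.pos; have := k.pos; rw [PNat.add_coe]; omega
  have e1 : pSub N (j + k) = ∑ a, ∑ b, ∑ e, ∑ f,
      XM N a e * (XM N ^ ((j : ℕ) - 1)) e b * (XM N b f * (XM N ^ ((k : ℕ) - 1)) f a) := by
    rw [pSub, h, pow_add, pow_succ', pow_succ', Matrix.trace]
    refine Finset.sum_congr rfl fun a _ => ?_
    rw [Matrix.diag, Matrix.mul_apply]
    refine Finset.sum_congr rfl fun b _ => ?_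
    rw [Matrix.mul_apply, Matrix.mul_apply, Finset.sum_mul_sum]
  rw [e1]
  simp only [Finset.mul_sum, tr_pderiv, XM_eq]
  refine Finset.sum_congr rfl fun a _ => Finset.sum_congr rfl fun b _ =>
    Finset.sum_congr rfl fun e _ => Finset.sum_congr rfl fun f _ => ?_
  ring

theorem W2_psubst (N : ℕ) {G : MvPolynomial ℕ+ ℚ} {S : Finset ℕ+} (h : Sup S G) :
    W2 N (psubst N G) = ∑ k ∈ S, W2 N (pSub N k) * psubst N (pderiv k G) +
      ∑ k ∈ S, ∑ j ∈ S, ((j : ℕ) : RN N) * ((k : ℕ) : RN N) * pSub N (j + k) *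
        psubst N (pderiv j (pderiv k G)) := by
  have key : ∀ a b e f, X (a, e) * X (b, f) * pderiv (b, e) (pderiv (a, f) (psubst N G)) =
      ∑ k ∈ S, X (a, e) * X (b, f) * pderiv (b, e) (pderiv (a, f) (pSub N k)) * psubst N (pderiv k G)
      + ∑ k ∈ S, ∑ j ∈ S, X (a, e) * X (b, f) * (pderiv (b, e) (pSub N j) * pderiv (a, f) (pSub N k)) *
        psubst N (pderiv j (pderiv k G)) := by
    intro a b e f
    rw [chain_rule' N _ h, map_sum, Finset.mul_sum, ← Finset.sum_add_distrib]
    refine Finset.sum_congr rfl fun k _ => ?_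
    rw [Derivation.leibniz, chain_rule' N _ (h.pd k), smul_eq_mul, smul_eq_mul, mul_add, add_comm,
      Finset.mul_sum, Finset.mul_sum]
    refine congrArg₂ (fun x y => x + y) ?_ (Finset.sum_congr rfl fun j _ => ?_)
    · rw [mul_comm (psubst N (pderiv k G))]; simp only [mul_assoc]
    · generalize pderiv (a, f) (pSub N k) = x
      generalize pderiv (b, e) (pSub N j) = y
      generalize psubst N (pderiv j (pderiv k G)) = z
      ring
  rw [W2, cg4 key, add4, c4, c4]
  refine congrArg₂ (fun x y => x + y) (Finset.sum_congr rfl fun k _ => ?_)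
    (Finset.sum_congr rfl fun k _ => ?_)
  · rw [mul4, W2]
  · rw [c4]
    refine Finset.sum_congr rfl fun j _ => ?_
    rw [mul4, W2_cross]

/-- Euler -/
noncomputable def EE (N : ℕ) (P : RN N) : RN N := ∑ c, ∑ e, X (c, e) * pderiv (c, e) P

theorem EE_psubst (N : ℕ) {G : MvPolynomial ℕ+ ℚ} {S : Finset ℕ+} (h : Sup S G) :
    EE N (psubst N G) = psubst N (∑ k ∈ S, ((k : ℕ) : ℚ) • (X k * pderiv k G)) := by
  have hX : ∀ k, psubst N (X k) = pSub N k := by simp [psubst]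
  simp only [EE, chain_rule' N _ h, Finset.mul_sum, map_sum, map_smul, map_mul, hX]
  have : ∀ k : ℕ+, ((k : ℕ) : ℚ) • (pSub N k * psubst N (pderiv k G)) =
     (∑ c, ∑ e, X (c, e) * pderiv (c, e) (pSub N k)) * psubst N (pderiv k G) := by
    intro k
    rw [E_p, Nat.cast_smul_eq_nsmul, nsmul_eq_mul, mul_assoc]
  simp only [this, Finset.sum_mul]
  symm
  rw [Finset.sum_comm]
  refine Finset.sum_congr rfl fun a _ => ?_
  rw [Finset.sum_comm]
  exact Finset.sum_congr rfl fun a _ => Finset.sum_congr rfl fun k _ => by ring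

theorem EE_pd (N : ℕ) (v : Fin N × Fin N) (P : RN N) :
    EE N (pderiv v P) = pderiv v (EE N P) - pderiv v P := by
  simp only [EE, map_sum, Derivation.leibniz, smul_eq_mul, Finset.sum_add_distrib, pderiv_X]
  have : ∑ c, ∑ e, pderiv (c, e) P * (Pi.single v 1 : Fin N × Fin N → RN N) (c, e) = pderiv v P := by
    rw [← Fintype.sum_prod_type' (f := fun c e => pderiv (c, e) P * (Pi.single v 1 : Fin N × Fin N → RN N) (c, e))]
    simp [Pi.single_apply]
  simp only [pd_comm v]
  simp only [this]
  ring

theorem lhs_eq (N : ℕ) (P : RN N) :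
    ∑ a : Fin N, ∑ b : Fin N, ∑ c : Fin N, NOpN N ![a, b, c] ![b, a, c] P =
      W2 N (EE N P - 2 * P) := by
  have h : ∀ a b c, NOpN N ![a, b, c] ![b, a, c] P = ∑ e, ∑ f, ∑ g, X (a, e) * X (b, f) * X (c, g) *
      pderiv (b, e) (pderiv (a, f) (pderiv (c, g) P)) := by
    intro a b c
    rw [NOpN]
    rw [← (Fin.consEquiv (fun _ : Fin 3 => Fin N)).sum_comp, Fintype.sum_prod_type]
    refine Finset.sum_congr rfl fun e _ => ?_
    rw [← (Fin.consEquiv (fun _ : Fin 2 => Fin N)).sum_comp, Fintype.sum_prod_type]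
    refine Finset.sum_congr rfl fun f _ => ?_
    rw [← (Fin.consEquiv (fun _ : Fin 1 => Fin N)).sum_comp, Fintype.sum_prod_type]
    refine Finset.sum_congr rfl fun g _ => ?_
    simp [Fin.consEquiv, Fin.prod_univ_succ, List.ofFn_succ, mul_assoc]
  have h2 : ∀ v w, pderiv v (pderiv w (EE N P - 2 * P)) = ∑ c, ∑ g, X (c, g) * pderiv v (pderiv w (pderiv (c, g) P)) := by
    intro v w
    have e1 := EE_pd N v (pderiv w P)
    rw [EE_pd N w P, map_sub] at e1
    have e2 : pderiv v (pderiv w (2 * P)) = 2 * pderiv v (pderiv w P) := by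
      rw [two_mul, two_mul, map_add, map_add]
    rw [map_sub, map_sub, e2]
    have e3 : EE N (pderiv v (pderiv w P)) = ∑ c, ∑ g, X (c, g) * pderiv v (pderiv w (pderiv (c, g) P)) := by
      rw [EE]
      refine Finset.sum_congr rfl fun c _ => Finset.sum_congr rfl fun g _ => ?_
      rw [pd_comm _ v, pd_comm _ w]
    rw [← e3, e1]; ring
  simp only [h, W2, h2, Finset.mul_sum]
  refine Finset.sum_congr rfl fun a _ => Finset.sum_congr rfl fun b _ => ?_
  rw [Finset.sum_comm]
  refine Finset.sum_congr rfl fun e _ => ?_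
  rw [Finset.sum_comm]
  refine Finset.sum_congr rfl fun f _ => Finset.sum_congr rfl fun c _ => Finset.sum_congr rfl fun g _ => ?_
  ring

theorem Sup.fin1 {M : Type*} [AddCommMonoid M] {S : Finset ℕ+} (f : ℕ+ → M)
    (h : ∀ a, a ∉ S → f a = 0) : ∑ᶠ a, f a = ∑ a ∈ S, f a := by
  apply finsum_eq_sum_of_support_subset
  intro a ha
  by_contra hc
  exact ha (h a (by simpa using hc))

theorem reindex {R : Type*} [AddCommMonoid R] (M : ℕ+) (g : ℕ+ → ℕ+ → ℕ+ → R)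
    (hg : ∀ a b k, k ∉ Finset.Icc 1 M → g a b k = 0) :
    ∑ a ∈ Finset.Icc 1 M, ∑ b ∈ Finset.Icc 1 M, g a b (a + b) =
      ∑ k ∈ Finset.Icc 1 M, ∑ i ∈ Finset.range ((k : ℕ) - 1),
        g (Nat.succPNat i) (Nat.toPNat' ((k : ℕ) - 1 - i)) k := by
  rw [← Finset.sum_product', Finset.sum_sigma',
    ← Finset.sum_filter_of_ne (p := fun x : ℕ+ × ℕ+ => x.1 + x.2 ∈ Finset.Icc 1 M)]
  · refine Finset.sum_bij' (fun x _ => (⟨x.1 + x.2, (x.1 : ℕ) - 1⟩ : Σ _ : ℕ+, ℕ))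
      (fun y _ => (Nat.succPNat y.2, Nat.toPNat' ((y.1 : ℕ) - 1 - y.2))) ?_ ?_ ?_ ?_ ?_
    · rintro ⟨a, b⟩ h
      have h1 := a.pos
      have h2 := b.pos
      simp only [Finset.mem_filter, Finset.mem_sigma, Finset.mem_range, PNat.add_coe] at h ⊢
      exact ⟨h.2, by omega⟩
    · rintro ⟨k, i⟩ h
      simp only [Finset.mem_sigma, Finset.mem_range, Finset.mem_Icc, 
        Finset.mem_filter, Finset.mem_product, ← PNat.coe_le_coe, PNat.add_coe,
        Nat.succPNat_coe, Nat.toPNat'_coe, PNat.one_coe] at h ⊢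
      rw [if_pos (by omega)]
      omega
    · rintro ⟨a, b⟩ h
      have h1 := a.pos
      have h2 := b.pos
      simp only [Prod.mk.injEq, ← PNat.coe_inj, Nat.succPNat_coe, Nat.toPNat'_coe, PNat.add_coe]
      rw [if_pos (by omega)]
      omega
    · rintro ⟨k, i⟩ h
      simp only [Finset.mem_sigma, Finset.mem_range] at h
      have : Nat.succPNat i + Nat.toPNat' ((k : ℕ) - 1 - i) = k := by
        simp only [← PNat.coe_inj, Nat.succPNat_coe, Nat.toPNat'_coe, PNat.add_coe]
        rw [if_pos (by omega)]
        omega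
      simp [this]
    · rintro ⟨a, b⟩ h
      have h1 := a.pos
      have h2 := b.pos
      have e1 : Nat.succPNat ((a : ℕ) - 1) = a := by
        simp only [← PNat.coe_inj, Nat.succPNat_coe]; omega
      have e2 : Nat.toPNat' (((a + b : ℕ+) : ℕ) - 1 - ((a : ℕ) - 1)) = b := by
        simp only [← PNat.coe_inj, Nat.toPNat'_coe, PNat.add_coe]
        rw [if_pos (by omega)]
        omega
      simp only [e1, e2]
  · rintro ⟨a, b⟩ _ h
    by_contra hc
    exact h (hg _ _ _ hc)

theorem psubst_X (N : ℕ) (k : ℕ+) : psubst N (X k) = pSub N k := by simp [psubst]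

theorem W2_final (N : ℕ) (M : ℕ+) {G : MvPolynomial ℕ+ ℚ} (h : Sup (Finset.Icc 1 M) G) :
    W2 N (psubst N G) = psubst N (
      ∑ a ∈ Finset.Icc 1 M, ∑ b ∈ Finset.Icc 1 M,
        (((a : ℕ) : ℚ) + ((b : ℕ) : ℚ)) • (X a * X b * pderiv (a + b) G) +
      ∑ a ∈ Finset.Icc 1 M, ∑ b ∈ Finset.Icc 1 M,
        (((a : ℕ) : ℚ) * ((b : ℕ) : ℚ)) • (X (a + b) * pderiv a (pderiv b G))) := by
  rw [W2_psubst N h, map_add]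
  refine congrArg₂ (fun x y => x + y) ?_ ?_
  · have := reindex M (fun a b k => ((k : ℕ) : ℚ) • (X a * X b * pderiv k G))
      (fun a b k hk => by rw [h k hk]; simp)
    simp only [PNat.add_coe, Nat.cast_add] at this
    rw [this, map_sum]
    refine Finset.sum_congr rfl fun k _ => ?_
    rw [W2_p, map_sum, Finset.mul_sum, Finset.sum_mul]
    refine Finset.sum_congr rfl fun i hi => ?_
    have hi := Finset.mem_range.1 hi
    rw [map_smul, map_mul, map_mul, psubst_X, psubst_X, pSub, pSub, Nat.succPNat_coe,
      Nat.toPNat'_coe, if_pos (by omega), Nat.cast_smul_eq_nsmul, nsmul_eq_mul, mul_assoc]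
  · rw [Finset.sum_comm]
    simp only [map_sum]
    refine Finset.sum_congr rfl fun a _ => Finset.sum_congr rfl fun b _ => ?_
    rw [map_smul, map_mul, psubst_X, ← Nat.cast_mul (α := ℚ), Nat.cast_smul_eq_nsmul, nsmul_eq_mul,
      Nat.cast_mul, mul_assoc]

theorem pd_E {S : Finset ℕ+} {F : MvPolynomial ℕ+ ℚ} (h : Sup S F) (k : ℕ+) :
    pderiv k (∑ c ∈ S, ((c : ℕ) : ℚ) • (X c * pderiv c F)) =
      ((k : ℕ) : ℚ) • pderiv k F + ∑ c ∈ S, ((c : ℕ) : ℚ) • (X c * pderiv c (pderiv k F)) := by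
  have e : ∀ c : ℕ+, pderiv k (((c : ℕ) : ℚ) • (X c * pderiv c F)) =
      (if c = k then ((k : ℕ) : ℚ) • pderiv k F else 0) +
        ((c : ℕ) : ℚ) • (X c * pderiv c (pderiv k F)) := by
    intro c
    rw [Derivation.map_smul, Derivation.leibniz, smul_add, add_comm, pderiv_X, pd_comm k c,
      smul_eq_mul, smul_eq_mul]
    refine congrArg₂ (fun x y => x + y) ?_ rfl
    split_ifs with hc
    · subst hc; simp
    · rw [Pi.single_eq_of_ne hc]; simp
  rw [map_sum, Finset.sum_congr rfl (fun c _ => e c), Finset.sum_add_distrib, Finset.sum_ite_eq']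
  split_ifs with hk
  · rfl
  · rw [h k hk, smul_zero]

theorem Sup.E {S : Finset ℕ+} {F : MvPolynomial ℕ+ ℚ} (h : Sup S F) :
    Sup S (∑ c ∈ S, ((c : ℕ) : ℚ) • (X c * pderiv c F) - 2 * F) := by
  intro k hk
  have : pderiv k (2 * F) = 0 := by rw [two_mul, map_add, h k hk, add_zero]
  rw [map_sub, this, pd_E h, h k hk]
  simp

theorem exists_Sup (F : MvPolynomial ℕ+ ℚ) : ∃ M : ℕ+, Sup (Finset.Icc 1 M) F := by
  obtain ⟨M, hM⟩ := F.vars.bddAbove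
  refine ⟨M, fun k hk => pderiv_eq_zero_of_notMem_vars fun hv => hk ?_⟩
  exact Finset.mem_Icc.2 ⟨one_le, hM hv⟩

set_option maxHeartbeats 2000000

theorem W21_in_power_sum_coordinates (N : ℕ) (hN : 1 ≤ N) (F : MvPolynomial ℕ+ ℚ) :
    (1/2 : ℚ) • ∑ a : Fin N, ∑ b : Fin N, ∑ c : Fin N,
        NOpN N ![a, b, c] ![b, a, c] (psubst N F) =
      psubst N (
        (1/2 : ℚ) • (∑ᶠ a : ℕ+, ∑ᶠ b : ℕ+,
          ((((a : ℕ) : ℚ) + ((b : ℕ) : ℚ)) * (((a : ℕ) : ℚ) + ((b : ℕ) : ℚ) - 2)) •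
            (MvPolynomial.X a * MvPolynomial.X b * MvPolynomial.pderiv (a + b) F)) +
        (1/2 : ℚ) • (∑ᶠ a : ℕ+, ∑ᶠ b : ℕ+,
          (((a : ℕ) : ℚ) * ((b : ℕ) : ℚ) * (((a : ℕ) : ℚ) + ((b : ℕ) : ℚ) - 2)) •
            (MvPolynomial.X (a + b) *
              MvPolynomial.pderiv a (MvPolynomial.pderiv b F))) +
        (1/2 : ℚ) • (∑ᶠ a : ℕ+, ∑ᶠ b : ℕ+, ∑ᶠ c : ℕ+,
          ((((a : ℕ) : ℚ) + ((b : ℕ) : ℚ)) * ((c : ℕ) : ℚ)) •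
            (MvPolynomial.X a * MvPolynomial.X b * MvPolynomial.X c *
              MvPolynomial.pderiv (a + b) (MvPolynomial.pderiv c F))) +
        (1/2 : ℚ) • (∑ᶠ a : ℕ+, ∑ᶠ b : ℕ+, ∑ᶠ c : ℕ+,
          (((a : ℕ) : ℚ) * ((b : ℕ) : ℚ) * ((c : ℕ) : ℚ)) •
            (MvPolynomial.X a * MvPolynomial.X (b + c) *
              MvPolynomial.pderiv a
                (MvPolynomial.pderiv b (MvPolynomial.pderiv c F))))) := by

  obtain ⟨M, h⟩ := exists_Sup F
  have hz : ∀ a b : ℕ+, a ∉ Finset.Icc 1 M → a + b ∉ Finset.Icc 1 M := by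
    intro a b ha hc
    refine ha (Finset.mem_Icc.2 ⟨one_le, ?_⟩)
    exact le_trans (PNat.lt_add_right a b).le (Finset.mem_Icc.1 hc).2
  have hz' : ∀ a b : ℕ+, b ∉ Finset.Icc 1 M → a + b ∉ Finset.Icc 1 M := by
    intro a b hb
    rw [add_comm]; exact hz b a hb
  have t1 : (∑ᶠ a : ℕ+, ∑ᶠ b : ℕ+,
          ((((a : ℕ) : ℚ) + ((b : ℕ) : ℚ)) * (((a : ℕ) : ℚ) + ((b : ℕ) : ℚ) - 2)) •
            (MvPolynomial.X a * MvPolynomial.X b * MvPolynomial.pderiv (a + b) F)) =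
      ∑ a ∈ Finset.Icc 1 M, ∑ b ∈ Finset.Icc 1 M,
          ((((a : ℕ) : ℚ) + ((b : ℕ) : ℚ)) * (((a : ℕ) : ℚ) + ((b : ℕ) : ℚ) - 2)) •
            (MvPolynomial.X a * MvPolynomial.X b * MvPolynomial.pderiv (a + b) F) := by
    rw [Sup.fin1 (S := Finset.Icc 1 M)]
    · refine Finset.sum_congr rfl fun a _ => Sup.fin1 _ fun b hb => ?_
      rw [h _ (hz' a b hb), mul_zero, smul_zero]
    · intro a ha
      refine finsum_eq_zero_of_forall_eq_zero fun b => ?_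
      rw [h _ (hz a b ha), mul_zero, smul_zero]
  have t2 : (∑ᶠ a : ℕ+, ∑ᶠ b : ℕ+,
          (((a : ℕ) : ℚ) * ((b : ℕ) : ℚ) * (((a : ℕ) : ℚ) + ((b : ℕ) : ℚ) - 2)) •
            (MvPolynomial.X (a + b) *
              MvPolynomial.pderiv a (MvPolynomial.pderiv b F))) =
      ∑ a ∈ Finset.Icc 1 M, ∑ b ∈ Finset.Icc 1 M,
          (((a : ℕ) : ℚ) * ((b : ℕ) : ℚ) * (((a : ℕ) : ℚ) + ((b : ℕ) : ℚ) - 2)) •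
            (MvPolynomial.X (a + b) *
              MvPolynomial.pderiv a (MvPolynomial.pderiv b F)) := by
    rw [Sup.fin1 (S := Finset.Icc 1 M)]
    · refine Finset.sum_congr rfl fun a _ => Sup.fin1 _ fun b hb => ?_
      rw [h _ hb, map_zero, mul_zero, smul_zero]
    · intro a ha
      refine finsum_eq_zero_of_forall_eq_zero fun b => ?_
      rw [(h.pd b) _ ha, mul_zero, smul_zero]
  have t3 : (∑ᶠ a : ℕ+, ∑ᶠ b : ℕ+, ∑ᶠ c : ℕ+,
          ((((a : ℕ) : ℚ) + ((b : ℕ) : ℚ)) * ((c : ℕ) : ℚ)) •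
            (MvPolynomial.X a * MvPolynomial.X b * MvPolynomial.X c *
              MvPolynomial.pderiv (a + b) (MvPolynomial.pderiv c F))) =
      ∑ a ∈ Finset.Icc 1 M, ∑ b ∈ Finset.Icc 1 M, ∑ c ∈ Finset.Icc 1 M,
          ((((a : ℕ) : ℚ) + ((b : ℕ) : ℚ)) * ((c : ℕ) : ℚ)) •
            (MvPolynomial.X a * MvPolynomial.X b * MvPolynomial.X c *
              MvPolynomial.pderiv (a + b) (MvPolynomial.pderiv c F)) := by
    rw [Sup.fin1 (S := Finset.Icc 1 M)]
    · refine Finset.sum_congr rfl fun a _ => ?_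
      rw [Sup.fin1 (S := Finset.Icc 1 M)]
      · refine Finset.sum_congr rfl fun b _ => Sup.fin1 _ fun c hc => ?_
        rw [h _ hc, map_zero, mul_zero, smul_zero]
      · intro b hb
        refine finsum_eq_zero_of_forall_eq_zero fun c => ?_
        rw [(h.pd c) _ (hz' a b hb), mul_zero, smul_zero]
    · intro a ha
      refine finsum_eq_zero_of_forall_eq_zero fun b =>
        finsum_eq_zero_of_forall_eq_zero fun c => ?_
      rw [(h.pd c) _ (hz a b ha), mul_zero, smul_zero]
  have t4 : (∑ᶠ a : ℕ+, ∑ᶠ b : ℕ+, ∑ᶠ c : ℕ+,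
          (((a : ℕ) : ℚ) * ((b : ℕ) : ℚ) * ((c : ℕ) : ℚ)) •
            (MvPolynomial.X a * MvPolynomial.X (b + c) *
              MvPolynomial.pderiv a
                (MvPolynomial.pderiv b (MvPolynomial.pderiv c F)))) =
      ∑ a ∈ Finset.Icc 1 M, ∑ b ∈ Finset.Icc 1 M, ∑ c ∈ Finset.Icc 1 M,
          (((a : ℕ) : ℚ) * ((b : ℕ) : ℚ) * ((c : ℕ) : ℚ)) •
            (MvPolynomial.X a * MvPolynomial.X (b + c) *
              MvPolynomial.pderiv a
                (MvPolynomial.pderiv b (MvPolynomial.pderiv c F))) := by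
    rw [Sup.fin1 (S := Finset.Icc 1 M)]
    · refine Finset.sum_congr rfl fun a _ => ?_
      rw [Sup.fin1 (S := Finset.Icc 1 M)]
      · refine Finset.sum_congr rfl fun b _ => Sup.fin1 _ fun c hc => ?_
        rw [h _ hc, map_zero, map_zero, mul_zero, smul_zero]
      · intro b hb
        refine finsum_eq_zero_of_forall_eq_zero fun c => ?_
        rw [(h.pd c) _ hb, map_zero, mul_zero, smul_zero]
    · intro a ha
      refine finsum_eq_zero_of_forall_eq_zero fun b =>
        finsum_eq_zero_of_forall_eq_zero fun c => ?_
      rw [((h.pd c).pd b) _ ha, mul_zero, smul_zero]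
  rw [t1, t2, t3, t4, lhs_eq, EE_psubst N h]
  have e2 : (2 : RN N) * psubst N F = psubst N (2 * F) := by rw [map_mul, map_ofNat]
  rw [e2, ← map_sub, W2_final N M h.E, ← map_smul, ← smul_add, ← smul_add, ← smul_add]
  congr 2
  have d1 : ∀ k : ℕ+, pderiv k (∑ c ∈ Finset.Icc 1 M, ((c : ℕ) : ℚ) • (X c * pderiv c F) - 2 * F) =
      (((k : ℕ) : ℚ) - 2) • pderiv k F +
        ∑ c ∈ Finset.Icc 1 M, ((c : ℕ) : ℚ) • (X c * pderiv k (pderiv c F)) := by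
    intro k
    rw [map_sub, pd_E h, two_mul, map_add]
    simp only [pd_comm k]
    module
  have d2 : ∀ a b : ℕ+, pderiv a (pderiv b
        (∑ c ∈ Finset.Icc 1 M, ((c : ℕ) : ℚ) • (X c * pderiv c F) - 2 * F)) =
      (((a : ℕ) : ℚ) + ((b : ℕ) : ℚ) - 2) • pderiv a (pderiv b F) +
        ∑ c ∈ Finset.Icc 1 M, ((c : ℕ) : ℚ) • (X c * pderiv c (pderiv a (pderiv b F))) := by
    intro a b
    rw [map_sub, pd_E h, two_mul, map_add, map_sub, map_add, map_add, pd_E (h.pd b),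
      Derivation.map_smul]
    module
  simp only [d2]
  simp only [d1]
  have r1 : ∀ a b : ℕ+, (((a : ℕ) : ℚ) + ((b : ℕ) : ℚ)) • (X a * X b *
      (((((a + b : ℕ+) : ℕ) : ℚ) - 2) • pderiv (a + b) F +
        ∑ c ∈ Finset.Icc 1 M, ((c : ℕ) : ℚ) • (X c * pderiv (a + b) (pderiv c F)))) =
      ((((a : ℕ) : ℚ) + ((b : ℕ) : ℚ)) * (((a : ℕ) : ℚ) + ((b : ℕ) : ℚ) - 2)) •
            (X a * X b * pderiv (a + b) F) +
      ∑ c ∈ Finset.Icc 1 M, ((((a : ℕ) : ℚ) + ((b : ℕ) : ℚ)) * ((c : ℕ) : ℚ)) •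
            (X a * X b * X c * pderiv (a + b) (pderiv c F)) := by
    intro a b
    rw [mul_add, smul_add, Finset.mul_sum, Finset.smul_sum, PNat.add_coe, Nat.cast_add,
      mul_smul_comm, smul_smul]
    refine congrArg₂ (fun x y => x + y) rfl (Finset.sum_congr rfl fun c _ => ?_)
    rw [mul_smul_comm, smul_smul, mul_assoc (X a * X b)]
  have r2 : ∀ a b : ℕ+, (((a : ℕ) : ℚ) * ((b : ℕ) : ℚ)) • (X (a + b) *
      ((((a : ℕ) : ℚ) + ((b : ℕ) : ℚ) - 2) • pderiv a (pderiv b F) +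
        ∑ c ∈ Finset.Icc 1 M, ((c : ℕ) : ℚ) • (X c * pderiv c (pderiv a (pderiv b F))))) =
      (((a : ℕ) : ℚ) * ((b : ℕ) : ℚ) * (((a : ℕ) : ℚ) + ((b : ℕ) : ℚ) - 2)) •
            (X (a + b) * pderiv a (pderiv b F)) +
      ∑ c ∈ Finset.Icc 1 M, (((c : ℕ) : ℚ) * ((a : ℕ) : ℚ) * ((b : ℕ) : ℚ)) •
            (X c * X (a + b) * pderiv c (pderiv a (pderiv b F))) := by
    intro a b
    rw [mul_add, smul_add, Finset.mul_sum, Finset.smul_sum, mul_smul_comm, smul_smul]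
    refine congrArg₂ (fun x y => x + y) rfl (Finset.sum_congr rfl fun c _ => ?_)
    rw [mul_smul_comm, smul_smul, ← mul_assoc (X (a + b)), mul_comm (X (a + b)) (X c),
      mul_comm _ ((c : ℕ) : ℚ), mul_assoc ((c : ℕ) : ℚ)]
  simp only [r1, r2, Finset.sum_add_distrib]
  have s4 : ∀ g : ℕ+ → ℕ+ → ℕ+ → MvPolynomial ℕ+ ℚ,
      ∑ a ∈ Finset.Icc 1 M, ∑ b ∈ Finset.Icc 1 M, ∑ c ∈ Finset.Icc 1 M, g c a b =
      ∑ a ∈ Finset.Icc 1 M, ∑ b ∈ Finset.Icc 1 M, ∑ c ∈ Finset.Icc 1 M, g a b c := by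
    intro g
    symm
    rw [Finset.sum_comm]
    refine Finset.sum_congr rfl fun a _ => ?_
    rw [Finset.sum_comm]
  rw [s4 (fun c a b => (((c : ℕ) : ℚ) * ((a : ℕ) : ℚ) * ((b : ℕ) : ℚ)) •
            (X c * X (a + b) * pderiv c (pderiv a (pderiv b F))))]
  abel
end
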